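/- arXiv:1501.03566 — 11 statements merged into one kernel-verified Lean document; each statement's English description precedes it below -/
import Mathlib

section
/- Let d ≥ 1 and let M be a t×n binary matrix with n > t that is d-disjunct and in which every column has weight exactly d+1. Then t ≥ (d+1)². -/
open Finset

/-- A family of columns (each column = the finset of rows where it has a 1)
is `d`-disjunct if no column is contained in the union of `≤ d` other columns. -/
def Disjunct {ι ρ : Type*} [DecidableEq ρ] (d : ℕ) (col : ι → Finset ρ) : Prop :=
  ∀ j : ι, ∀ S : Finset ι, j ∉ S → S.card ≤ d → ¬ col j ⊆ S.biUnion col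

/-- A column `j` is isolated if it contains a row belonging to no other column. -/
def IsolatedCol {ι ρ : Type*} (col : ι → Finset ρ) (j : ι) : Prop :=
  ∃ i ∈ col j, ∀ j', i ∈ col j' → j' = j

/-- If a `t × n` `d`-disjunct binary matrix with `n > t` has all columns of
weight exactly `d + 1`, then `t ≥ (d+1)²`. -/
theorem disjunct_constant_weight_bound
    (d t n : ℕ) (hd : 1 ≤ d) (hn : n > t)
    (col : Fin n → Finset (Fin t))
    (hdis : Disjunct d col)
    (hw : ∀ j, (col j).card = d + 1) :
    t ≥ (d + 1) ^ 2 := by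
  classical
  have key : ∀ j, ¬ IsolatedCol col j → ∀ j', j' ≠ j → (col j ∩ col j').card ≤ 1 := by
    intro j hj j' hne
    by_contra hcon
    have hg : ∀ i, ∃ k, i ∈ col j → k ≠ j ∧ i ∈ col k := by
      intro i
      by_cases hi : i ∈ col j
      · by_contra hno
        apply hj
        refine ⟨i, hi, fun k hk => ?_⟩
        by_contra hkj
        exact hno ⟨k, fun _ => ⟨hkj, hk⟩⟩
      · exact ⟨j, fun h => absurd h hi⟩
    choose g hg using hg
    refine hdis j (insert j' ((col j \ col j').image g)) ?_ ?_ ?_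
    · simp only [Finset.mem_insert, Finset.mem_image, Finset.mem_sdiff, not_or]
      refine ⟨hne.symm, ?_⟩
      rintro ⟨i, ⟨hi, _⟩, h⟩
      exact (hg i hi).1 h
    · have h1 := Finset.card_insert_le j' ((col j \ col j').image g)
      have h2 : ((col j \ col j').image g).card ≤ (col j \ col j').card :=
        Finset.card_image_le
      have h3 := Finset.card_sdiff_add_card_inter (col j) (col j')
      have h4 := hw j
      omega
    · intro i hi
      rw [Finset.mem_biUnion]
      by_cases hi' : i ∈ col j'
      · exact ⟨j', Finset.mem_insert_self _ _, hi'⟩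
      · exact ⟨g i, Finset.mem_insert_of_mem (Finset.mem_image_of_mem _
          (Finset.mem_sdiff.2 ⟨hi, hi'⟩)), (hg i hi).2⟩
  have ht : ∃ _ : Fin t, True := by
    have h := hw ⟨0, by omega⟩
    obtain ⟨x, _⟩ := Finset.card_pos.1 (by omega : 0 < (col ⟨0, by omega⟩).card)
    exact ⟨x, trivial⟩
  obtain ⟨x0, _⟩ := ht
  have hf : ∀ j, ∃ i, IsolatedCol col j → i ∈ col j ∧ ∀ j', i ∈ col j' → j' = j := by
    intro j
    by_cases h : IsolatedCol col j
    · obtain ⟨i, h1, h2⟩ := h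
      exact ⟨i, fun _ => ⟨h1, h2⟩⟩
    · exact ⟨x0, fun h' => absurd h' h⟩
  choose f hf using hf
  let I : Finset (Fin n) := Finset.univ.filter (fun j => IsolatedCol col j)
  let J : Finset (Fin n) := Finset.univ.filter (fun j => ¬ IsolatedCol col j)
  have hIJ : I.card + J.card = n := by
    have := Finset.card_filter_add_card_filter_not (s := (Finset.univ : Finset (Fin n)))
      (fun j => IsolatedCol col j)
    simpa [I, J] using this
  let R : Finset (Fin t) := (I.image f)ᶜ
  have hR : I.card + R.card = t := by
    have h1 : (I.image f).card = I.card := by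
      apply Finset.card_image_of_injOn
      intro a ha b hb hab
      have ha' : IsolatedCol col a := (Finset.mem_filter.1 ha).2
      have hb' : IsolatedCol col b := (Finset.mem_filter.1 hb).2
      apply (hf b hb').2
      rw [← hab]
      exact (hf a ha').1
    have h2 := Finset.card_add_card_compl (I.image f)
    rw [h1, Fintype.card_fin] at h2
    exact h2
  have hsub : ∀ j ∈ J, col j ⊆ R := by
    intro j hj i hi
    have hj' : ¬ IsolatedCol col j := (Finset.mem_filter.1 hj).2
    rw [Finset.mem_compl, Finset.mem_image]
    rintro ⟨a, ha, rfl⟩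
    have ha' : IsolatedCol col a := (Finset.mem_filter.1 ha).2
    have := (hf a ha').2 j hi
    exact hj' (this ▸ ha')
  have hdc : ∑ r ∈ R, (J.filter (fun j => r ∈ col j)).card = J.card * (d + 1) := by
    have h := Finset.sum_card_bipartiteAbove_eq_sum_card_bipartiteBelow
      (s := R) (t := J) (fun r j => r ∈ col j)
    simp only [Finset.bipartiteAbove, Finset.bipartiteBelow] at h
    rw [h, Finset.sum_const_nat]
    intro j hj
    rw [← hw j]
    congr 1
    ext i
    simp only [Finset.mem_filter]
    exact ⟨fun h => h.2, fun h => ⟨hsub j hj h, h⟩⟩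
  have hex : ∃ r, d + 2 ≤ (J.filter (fun j => r ∈ col j)).card := by
    by_contra hno
    push Not at hno
    have h1 : ∑ r ∈ R, (J.filter (fun j => r ∈ col j)).card ≤ ∑ _r ∈ R, (d + 1) :=
      Finset.sum_le_sum (fun r _ => by have := hno r; omega)
    rw [hdc, Finset.sum_const, smul_eq_mul] at h1
    have := Nat.le_of_mul_le_mul_right h1 (Nat.succ_pos d)
    omega
  obtain ⟨r, hr⟩ := hex
  set K := J.filter (fun j => r ∈ col j) with hK
  have hcard : (K.biUnion (fun j => (col j).erase r)).card = K.card * d := by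
    rw [Finset.card_biUnion, Finset.sum_const_nat]
    · intro j hj
      rw [Finset.card_erase_of_mem (Finset.mem_filter.1 hj).2, hw j]
      rfl
    · intro a ha b hb hab
      refine Finset.disjoint_left.2 ?_
      intro i hia hib
      have hia := Finset.mem_erase.1 hia
      have hib := Finset.mem_erase.1 hib
      have ha1 := Finset.mem_filter.1 ha
      have hb1 := Finset.mem_filter.1 hb
      have h := key a (Finset.mem_filter.1 ha1.1).2 b hab.symm
      exact hia.1 (Finset.card_le_one.1 h i (Finset.mem_inter.2 ⟨hia.2, hib.2⟩) r
        (Finset.mem_inter.2 ⟨ha1.2, hb1.2⟩))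
  have hlt : (K.biUnion (fun j => (col j).erase r)).card + 1 ≤ t := by
    have hrn : r ∉ K.biUnion (fun j => (col j).erase r) := by simp
    rw [← Finset.card_insert_of_notMem hrn]
    simpa using Finset.card_le_univ (insert r (K.biUnion (fun j => (col j).erase r)))
  rw [hcard] at hlt
  have := Nat.mul_le_mul_right d hr
  nlinarith
end

section
/- Let d ≥ 1 and let M be a t×n binary matrix with n > t that is d-disjunct. Then t ≥ ((15+√33)/24)·d². -/
open Finset

/-- Sets of a family with no large matching. -/
def NuLe {α : Type*} [DecidableEq α] (s : ℕ) (E : Finset (Finset α)) : Prop :=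
  ∀ M ⊆ E, (∀ a ∈ M, ∀ b ∈ M, a ≠ b → Disjoint a b) → M.card ≤ s

/-- Apply the transposition `(i j)` to a set. -/
def swp (i j : ℕ) (e : Finset ℕ) : Finset ℕ := e.map (Equiv.swap i j).toEmbedding

/-- The shift of a set relative to a family. -/
noncomputable def shf (E : Finset (Finset ℕ)) (i j : ℕ) (e : Finset ℕ) : Finset ℕ :=
  if j ∈ e ∧ i ∉ e ∧ swp i j e ∉ E then swp i j e else e

lemma swp_inj (i j : ℕ) : Function.Injective (swp i j) := Finset.map_injective _

lemma mem_swp (i j x : ℕ) (e : Finset ℕ) : x ∈ swp i j e ↔ Equiv.swap i j x ∈ e := by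
  unfold swp
  rw [Finset.mem_map_equiv]
  simp

lemma swp_swp (i j : ℕ) (e : Finset ℕ) : swp i j (swp i j e) = e := by
  ext x; simp [mem_swp]

lemma swp_fix {i j : ℕ} {e : Finset ℕ} (hi : i ∉ e) (hj : j ∉ e) : swp i j e = e := by
  ext x
  rw [mem_swp]
  by_cases h1 : x = i
  · subst h1; simp [hi, hj]
  by_cases h2 : x = j
  · subst h2; simp [hi, hj]
  rw [Equiv.swap_apply_of_ne_of_ne h1 h2]

lemma shf_injOn (E : Finset (Finset ℕ)) (i j : ℕ) : Set.InjOn (shf E i j) (E : Set (Finset ℕ)) := by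
  intro a ha b hb hab
  have ha' : a ∈ E := ha
  have hb' : b ∈ E := hb
  unfold shf at hab
  split_ifs at hab with h1 h2 h2
  · exact swp_inj i j hab
  · rw [hab] at h1; exact absurd hb' h1.2.2
  · rw [← hab] at h2; exact absurd ha' h2.2.2
  · exact hab

lemma shf_nu (E : Finset (Finset ℕ)) (i j s : ℕ) (h : NuLe s E) :
    NuLe s (E.image (shf E i j)) := by
  intro M hM hd
  -- every member is old or new
  have key : ∀ m ∈ M, (m ∈ E ∧ (j ∈ m → i ∉ m → swp i j m ∈ E)) ∨
      (m ∉ E ∧ i ∈ m ∧ swp i j m ∈ E) := by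
    intro m hm
    obtain ⟨e, he, rfl⟩ := Finset.mem_image.1 (hM hm)
    unfold shf
    split_ifs with h1
    · right
      refine ⟨h1.2.2, ?_, ?_⟩
      · rw [mem_swp]; simpa using h1.1
      · rw [swp_swp]; exact he
    · left
      refine ⟨he, fun h2 h3 => ?_⟩
      by_contra h4
      exact h1 ⟨h2, h3, h4⟩
  by_cases hall : M ⊆ E
  · exact h M hall hd
  obtain ⟨m0, hm0, hm0E⟩ := Finset.not_subset.1 hall
  have k0 : i ∈ m0 ∧ swp i j m0 ∈ E := by
    rcases key m0 hm0 with h1 | h1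
    · exact absurd h1.1 hm0E
    · exact h1.2
  have := h (M.image (swp i j)) ?_ ?_
  · rwa [Finset.card_image_of_injective _ (swp_inj i j)] at this
  · intro x hx
    obtain ⟨m, hm, rfl⟩ := Finset.mem_image.1 hx
    by_cases hmm : m = m0
    · rw [hmm]; exact k0.2
    have hi : i ∉ m := fun hi => Finset.disjoint_left.1 (hd m hm m0 hm0 hmm) hi k0.1
    rcases key m hm with h1 | h1
    · by_cases hj : j ∈ m
      · exact h1.2 hj hi
      · rw [swp_fix hi hj]; exact h1.1
    · exact absurd h1.2.1 hi
  · intro a ha b hb hab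
    obtain ⟨a, ha1, rfl⟩ := Finset.mem_image.1 ha
    obtain ⟨b, hb1, rfl⟩ := Finset.mem_image.1 hb
    have : Disjoint a b := hd a ha1 b hb1 (fun h => hab (by rw [h]))
    rw [Finset.disjoint_left] at this ⊢
    intro x hx hx'
    rw [mem_swp] at hx hx'
    exact this hx hx'

/-- Shifted families exist. -/
lemma exists_shifted (k s : ℕ) : ∀ (w : ℕ) (E : Finset (Finset ℕ)),
    (∑ e ∈ E, ∑ x ∈ e, x) = w → (∀ e ∈ E, e.card = 2 ∧ e ⊆ range k) → NuLe s E →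
    ∃ F : Finset (Finset ℕ), F.card = E.card ∧ (∀ e ∈ F, e.card = 2 ∧ e ⊆ range k) ∧ NuLe s F ∧
      ∀ i j, i < j → ∀ e ∈ F, j ∈ e → i ∉ e → swp i j e ∈ F := by
  intro w
  induction w using Nat.strong_induction_on with
  | _ w ih =>
    intro E hw hE hnu
    by_cases hst : ∀ i j, i < j → ∀ e ∈ E, j ∈ e → i ∉ e → swp i j e ∈ E
    · exact ⟨E, rfl, hE, hnu, hst⟩
    push Not at hst
    obtain ⟨i, j, hij, e0, he0, hj, hi, hne⟩ := hst
    have hlt : ∀ e : Finset ℕ, j ∈ e → i ∉ e → ∑ x ∈ swp i j e, x < ∑ x ∈ e, x := by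
      intro e hje hie
      unfold swp
      rw [Finset.sum_map]
      apply Finset.sum_lt_sum
      · intro x hx
        have h1 : x ≠ i := fun h => hie (h ▸ hx)
        by_cases h2 : x = j
        · subst h2; simp [hij.le]
        · simp [Equiv.swap_apply_of_ne_of_ne h1 h2]
      · exact ⟨j, hje, by simpa using hij⟩
    have hsum : ∑ e ∈ E.image (shf E i j), ∑ x ∈ e, x < w := by
      rw [Finset.sum_image (shf_injOn E i j), ← hw]
      apply Finset.sum_lt_sum
      · intro e he
        unfold shf
        split_ifs with h1
        · exact (hlt e h1.1 h1.2.1).le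
        · exact le_rfl
      · refine ⟨e0, he0, ?_⟩
        unfold shf
        rw [if_pos ⟨hj, hi, hne⟩]
        exact hlt e0 hj hi
    have hsz : ∀ e ∈ E.image (shf E i j), e.card = 2 ∧ e ⊆ range k := by
      intro x hx
      obtain ⟨e, he, rfl⟩ := Finset.mem_image.1 hx
      unfold shf
      split_ifs with h1
      · refine ⟨by unfold swp; rw [Finset.card_map]; exact (hE e he).1, ?_⟩
        intro x hx
        rw [mem_swp] at hx
        have hjk := Finset.mem_range.1 ((hE e he).2 h1.1)
        have hxk := Finset.mem_range.1 ((hE e he).2 hx)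
        rw [Finset.mem_range]
        by_cases h2 : x = i
        · omega
        by_cases h3 : x = j
        · omega
        rwa [Equiv.swap_apply_of_ne_of_ne h2 h3] at hxk
      · exact hE e he
    obtain ⟨F, h1, h2, h3, h4⟩ := ih _ hsum (E.image (shf E i j)) rfl hsz (shf_nu E i j s hnu)
    refine ⟨F, ?_, h2, h3, h4⟩
    rw [h1, Finset.card_image_of_injOn (shf_injOn E i j)]

lemma swp_pair {i j y : ℕ} (h : y ≠ i) (h' : y ≠ j) : swp i j {j, y} = {i, y} := by
  unfold swp
  rw [Finset.map_insert, Finset.map_singleton]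
  simp [Equiv.swap_apply_of_ne_of_ne h h']

/-- Erdős–Gallai, in the form given by shifting. -/
lemma erdos_gallai (k s : ℕ) (E : Finset (Finset ℕ))
    (hE : ∀ e ∈ E, e.card = 2 ∧ e ⊆ range k) (hnu : NuLe s E) :
    ∃ i ≤ s, E.card ≤ (2 * s + 1 - i).choose 2 + i * (k - (2 * s + 1 - i)) := by
  obtain ⟨F, hcard, hF, hnuF, hsh⟩ := exists_shifted k s _ E rfl hE hnu
  have step : ∀ i x y, i < x → y ≠ i → y ≠ x → ({x, y} : Finset ℕ) ∈ F → ({i, y} : Finset ℕ) ∈ F := by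
    intro i x y hix hyi hyx h
    rw [← swp_pair hyi hyx]
    exact hsh i x hix _ h (by simp) (by simp; omega)
  have down : ∀ a b a' b', a < b → a' ≤ a → b' ≤ b → a' < b' → ({a, b} : Finset ℕ) ∈ F →
      ({a', b'} : Finset ℕ) ∈ F := by
    intro a b a' b' hab ha hb hab' h
    have h1 : ({a', b} : Finset ℕ) ∈ F := by
      rcases ha.lt_or_eq with h2 | h2
      · exact step a' a b h2 (by omega) (by omega) h
      · rwa [h2]
    rcases hb.lt_or_eq with h2 | h2
    · rw [Finset.pair_comm] at h1 ⊢
      exact step b' b a' h2 (by omega) (by omega) h1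
    · rwa [h2]
  have hex : ∃ i ≤ s, ({i, 2 * s + 1 - i} : Finset ℕ) ∉ F := by
    by_contra hcon
    push Not at hcon
    have hmem : ∀ i x : ℕ, x ∈ ({i, 2 * s + 1 - i} : Finset ℕ) ↔ x = i ∨ x = 2 * s + 1 - i := by
      intro i x; simp
    have hinj : ∀ i ≤ s, ∀ i' ≤ s, ∀ x, x ∈ ({i, 2 * s + 1 - i} : Finset ℕ) →
        x ∈ ({i', 2 * s + 1 - i'} : Finset ℕ) → i = i' := by
      intro i hi i' hi' x hx hx'
      rw [hmem] at hx hx'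
      omega
    have := hnuF ((range (s + 1)).image (fun i => ({i, 2 * s + 1 - i} : Finset ℕ))) ?_ ?_
    · rw [Finset.card_image_of_injOn, Finset.card_range] at this
      · omega
      · intro i hi i' hi' h
        simp only [Finset.coe_range, Set.mem_Iio] at hi hi'
        have h' : ({i, 2 * s + 1 - i} : Finset ℕ) = {i', 2 * s + 1 - i'} := h
        refine hinj i (by omega) i' (by omega) i (by simp) ?_
        rw [← h']; simp
    · intro e he
      obtain ⟨i, hi, rfl⟩ := Finset.mem_image.1 he
      exact hcon i (by rw [Finset.mem_range] at hi; omega)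
    · intro a ha b hb hab
      obtain ⟨i, hi, rfl⟩ := Finset.mem_image.1 ha
      obtain ⟨i', hi', rfl⟩ := Finset.mem_image.1 hb
      rw [Finset.mem_range] at hi hi'
      rw [Finset.disjoint_left]
      intro x hx hx'
      exact hab (by rw [hinj i (by omega) i' (by omega) x hx hx'])
  obtain ⟨i, his, hi⟩ := hex
  refine ⟨i, his, ?_⟩
  rw [← hcard]
  have hsub : F ⊆ powersetCard 2 (range (2 * s + 1 - i)) ∪
      (range i ×ˢ Ico (2 * s + 1 - i) k).image (fun p => ({p.1, p.2} : Finset ℕ)) := by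
    intro e he
    have main : ∀ a b, a < b → e = {a, b} → e ∈ powersetCard 2 (range (2 * s + 1 - i)) ∪
      (range i ×ˢ Ico (2 * s + 1 - i) k).image (fun p => ({p.1, p.2} : Finset ℕ)) := by
      intro a b hab h
      have hbk : b < k := Finset.mem_range.1 ((hF e he).2 (by rw [h]; simp))
      rw [Finset.mem_union]
      by_cases hb : b < 2 * s + 1 - i
      · left
        rw [Finset.mem_powersetCard]
        refine ⟨?_, (hF e he).1⟩
        intro x hx
        rw [h] at hx
        simp only [Finset.mem_insert, Finset.mem_singleton] at hx
        rw [Finset.mem_range]; omega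
      · right
        rw [Finset.mem_image]
        refine ⟨(a, b), ?_, h.symm⟩
        rw [Finset.mem_product, Finset.mem_range, Finset.mem_Ico]
        refine ⟨?_, by simpa using hb, hbk⟩
        by_contra ha
        simp only at ha
        exact hi (down a b i (2 * s + 1 - i) hab (by omega) (by omega) (by omega) (h ▸ he))
    obtain ⟨a, b, hab, h⟩ := Finset.card_eq_two.1 (hF e he).1
    rcases lt_or_gt_of_ne hab with h1 | h1
    · exact main a b h1 h
    · exact main b a h1 (by rw [h, Finset.pair_comm])
  calc F.card ≤ _ := Finset.card_le_card hsub
    _ ≤ _ := Finset.card_union_le _ _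
    _ ≤ _ := by
      apply Nat.add_le_add
      · rw [Finset.card_powersetCard, Finset.card_range]
      · refine Finset.card_image_le.trans ?_
        rw [Finset.card_product, Finset.card_range, Nat.card_Ico]

/-- Erdős–Gallai on an arbitrary finite vertex set. -/
lemma erdos_gallai' {α : Type*} [DecidableEq α] (V : Finset α) (s : ℕ)
    (E : Finset (Finset α)) (hE : E ⊆ powersetCard 2 V) (hnu : NuLe s E) :
    ∃ i ≤ s, E.card ≤ (2 * s + 1 - i).choose 2 + i * (V.card - (2 * s + 1 - i)) := by
  let f : α → ℕ := fun x => if h : x ∈ V then (V.equivFin ⟨x, h⟩ : ℕ) else 0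
  have hf : Set.InjOn f (V : Set α) := by
    intro x hx y hy hxy
    have hx' : x ∈ V := hx
    have hy' : y ∈ V := hy
    simp only [f, hx', hy', dif_pos] at hxy
    have := V.equivFin.injective (Fin.ext hxy)
    simpa using this
  have hfk : ∀ x ∈ V, f x < V.card := by
    intro x hx
    simp only [f, hx, dif_pos]
    exact (V.equivFin ⟨x, hx⟩).2
  have hEV : ∀ e ∈ E, e ⊆ V := fun e he => (Finset.mem_powersetCard.1 (hE he)).1
  have himg : ∀ a ∈ E, ∀ b ∈ E, a.image f = b.image f → a ⊆ b := by
    intro a ha b hb h x hx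
    have h1 : f x ∈ b.image f := by rw [← h]; exact Finset.mem_image_of_mem f hx
    obtain ⟨y, hy, hyx⟩ := Finset.mem_image.1 h1
    rw [← hf (hEV b hb hy) (hEV a ha hx) hyx]; exact hy
  have hinj : Set.InjOn (fun e : Finset α => e.image f) (E : Set (Finset α)) := by
    intro a ha b hb h
    exact Finset.Subset.antisymm (himg a ha b hb h) (himg b hb a ha h.symm)
  have h1 : ∀ e ∈ E.image (fun e => e.image f), e.card = 2 ∧ e ⊆ range V.card := by
    intro x hx
    obtain ⟨e, he, rfl⟩ := Finset.mem_image.1 hx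
    refine ⟨?_, ?_⟩
    · rw [Finset.card_image_of_injOn (hf.mono (by exact_mod_cast hEV e he))]
      exact (Finset.mem_powersetCard.1 (hE he)).2
    · intro y hy
      obtain ⟨x, hx, rfl⟩ := Finset.mem_image.1 hy
      exact Finset.mem_range.2 (hfk x (hEV e he hx))
  have h2 : NuLe s (E.image (fun e => e.image f)) := by
    intro M hM hd
    obtain ⟨M', hM', rfl⟩ := Finset.subset_image_iff.1 hM
    refine Finset.card_image_le.trans (hnu M' (by exact_mod_cast hM') ?_)
    intro a ha b hb hab
    have haE : a ∈ E := hM' ha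
    have hbE : b ∈ E := hM' hb
    have := hd _ (Finset.mem_image_of_mem _ ha) _ (Finset.mem_image_of_mem _ hb)
      (fun h => hab (hinj haE hbE h))
    rw [Finset.disjoint_left] at this ⊢
    intro x hx hx'
    exact this (Finset.mem_image_of_mem f hx) (Finset.mem_image_of_mem f hx')
  obtain ⟨i, hi, h⟩ := erdos_gallai V.card s _ h1 h2
  refine ⟨i, hi, ?_⟩
  rwa [Finset.card_image_of_injOn hinj] at h

/-- Private pairs count bound in one column. -/
lemma numeric (d k s i e t : ℕ) (C : ℝ) (hC : 12 * C ^ 2 = 15 * C - 4) (hC1 : 0.86 < C)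
    (hC2 : C < 0.87) (hd : 1 ≤ d) (hk : k = d + 1 + s) (hkC : (k : ℝ) < C * (2 * d - 1))
    (hi : i ≤ s) (he : e ≤ (2 * s + 1 - i).choose 2 + i * (k - (2 * s + 1 - i)))
    (ht : 2 * ((k.choose 2 : ℕ) - (e : ℝ)) ≤ t) : C * (d : ℝ) ^ 2 ≤ t := by
  obtain ⟨r, rfl⟩ := Nat.exists_eq_add_of_le hi
  have hkd : (k : ℝ) = d + 1 + i + r := by rw [hk]; push_cast; ring
  have hd1 : (1 : ℝ) ≤ d := by exact_mod_cast hd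
  have hi0 : (0 : ℝ) ≤ i := Nat.cast_nonneg _
  have hr0 : (0 : ℝ) ≤ r := Nat.cast_nonneg _
  have hkd2 : k < 2 * d := by
    have : (k : ℝ) < 2 * d := by nlinarith
    exact_mod_cast this
  have e1 : 2 * (i + r) + 1 - i = i + 2 * r + 1 := by omega
  have e2 : ((k - (i + 2 * r + 1) : ℕ) : ℝ) = (k : ℝ) - (i + 2 * r + 1) := by
    rw [Nat.cast_sub (by omega)]; push_cast; ring
  rw [e1] at he
  have he' : (e : ℝ) ≤ ((i + 2 * r + 1).choose 2 : ℕ) + i * ((k : ℝ) - (i + 2 * r + 1)) := by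
    rw [← e2]; exact_mod_cast he
  rw [Nat.cast_choose_two] at he' ht
  push_cast at he'
  have hd2 : (2 : ℝ) ≤ d := by
    have : 2 ≤ d := by omega
    exact_mod_cast this
  -- the two extreme cases
  have hmain : (k : ℝ) * (k - 1) - ((i + 2 * r + 1) * (i + 2 * r) + 2 * i * (k - (i + 2 * r + 1))) ≤ t := by
    linarith
  refine le_trans ?_ hmain
  rw [hkd] at hkC ⊢
  generalize (d : ℝ) = D at *
  generalize (i : ℝ) = I at *
  generalize (r : ℝ) = R at *
  obtain ⟨S, hS⟩ : ∃ S, S = I + R := ⟨_, rfl⟩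
  have hSle : S ≤ C * (2 * D - 1) - D - 1 := by linarith
  have A : C * D ^ 2 ≤ (D + 1) * D := by nlinarith
  have B : C * D ^ 2 ≤ (D + 1 + S) * (D + S) - (2 * S + 1) * (2 * S) := by
    have hS0 : 0 ≤ S := by linarith
    set T := C * (2 * D - 1) - D - 1 with hT
    have hend : C * D ^ 2 ≤ (D + 1 + T) * (D + T) - (2 * T + 1) * (2 * T) := by
      have : (D + 1 + T) * (D + T) - (2 * T + 1) * (2 * T) - C * D ^ 2
        = (17 * C - 10) * D - (3 * C ^ 2 + 5 * C + 2) := by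
        rw [hT]; linear_combination (-(D^2) + D) * hC
      nlinarith
    -- concavity
    by_cases hslope : 2 * D - 1 - 3 * S ≥ 0
    · nlinarith [mul_nonneg hS0 hslope]
    · nlinarith [mul_nonneg (sub_nonneg.2 hSle) (by linarith : 0 ≤ 3 * (S + T) - (2 * D - 1))]
  have hR : R = S - I := by linarith
  subst hR
  by_cases hB : 3 * I + 2 * D - 6 * S - 1 ≤ 0
  · nlinarith [mul_nonneg hi0 (neg_nonneg.2 hB)]
  · nlinarith [mul_nonneg hr0 (by linarith : 0 ≤ 3 * (S + I) + 2 * D - 6 * S - 1)]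

lemma main_step {ι ρ : Type*} [DecidableEq ι] [DecidableEq ρ] (C : ℝ)
    (hC : 12 * C ^ 2 = 15 * C - 4) (hC1 : 0.86 < C) (hC2 : C < 0.87)
    (d : ℕ) (hd : 1 ≤ d) (c : ι → Finset ρ) (I : Finset ι) (R : Finset ρ)
    (hc : ∀ j ∈ I, c j ⊆ R) (hcard : R.card < I.card)
    (hdis : ∀ j ∈ I, ∀ S ⊆ I, j ∉ S → S.card ≤ d → ¬ c j ⊆ S.biUnion c)
    (hiso : ∀ j ∈ I, ∀ x ∈ c j, ∃ j' ∈ I, j' ≠ j ∧ x ∈ c j')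
    (hsmall : ∀ j ∈ I, ((c j).card : ℝ) < C * (2 * d - 1)) :
    C * (d : ℝ) ^ 2 ≤ (R.card : ℝ) := by
  classical
  by_contra hcon
  let N : ι → Finset (Finset ρ) := fun j =>
    (powersetCard 2 (c j)).filter (fun e => ∃ j' ∈ I, j' ≠ j ∧ e ⊆ c j')
  let P : ι → Finset (Finset ρ) := fun j =>
    (powersetCard 2 (c j)).filter (fun e => ¬ ∃ j' ∈ I, j' ≠ j ∧ e ⊆ c j')
  have hNP : ∀ j, (N j).card + (P j).card = (c j).card.choose 2 := by
    intro j
    rw [← Finset.card_powersetCard]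
    exact Finset.card_filter_add_card_filter_not _
  -- a cover lemma
  have cover : ∀ j ∈ I, ∀ Q : Finset (Finset ρ), Q.card ≤ d →
      (∀ e ∈ Q, ∃ j' ∈ I, j' ≠ j ∧ e ⊆ c j') → c j ⊆ Q.biUnion id → False := by
    intro j hj Q hQ hQ' hsub
    have : Nonempty ι := ⟨j⟩
    choose! g hg using hQ'
    refine hdis j hj (Q.image g) ?_ ?_ (Finset.card_image_le.trans hQ) ?_
    · intro x hx
      obtain ⟨e, he, rfl⟩ := Finset.mem_image.1 hx
      exact (hg e he).1
    · intro h
      obtain ⟨e, he, h⟩ := Finset.mem_image.1 h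
      exact (hg e he).2.1 h
    · intro x hx
      obtain ⟨e, he, hxe⟩ := Finset.mem_biUnion.1 (hsub hx)
      exact Finset.mem_biUnion.2 ⟨g e, Finset.mem_image_of_mem g he, (hg e he).2.2 hxe⟩
  have hP : ∀ j ∈ I, R.card < 2 * (P j).card := by
    intro j hj
    have hkd : d + 1 ≤ (c j).card := by
      by_contra hlt
      refine cover j hj ((c j).image (fun x => {x})) (Finset.card_image_le.trans (by omega)) ?_ ?_
      · intro e he
        obtain ⟨x, hx, rfl⟩ := Finset.mem_image.1 he
        simpa using hiso j hj x hx
      · intro x hx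
        exact Finset.mem_biUnion.2 ⟨{x}, Finset.mem_image_of_mem _ hx, by simp⟩
    obtain ⟨s, hs⟩ := Nat.exists_eq_add_of_le hkd
    have hnu : NuLe s (N j) := by
      intro M hM hdM
      by_contra hlt
      obtain ⟨M', hM', hcM'⟩ := Finset.exists_subset_card_eq (s := M) (n := s + 1) (by omega)
      have hN : ∀ e ∈ M', (e ⊆ c j ∧ e.card = 2) ∧ ∃ j' ∈ I, j' ≠ j ∧ e ⊆ c j' := by
        intro e he
        have := Finset.mem_filter.1 (hM (hM' he))
        exact ⟨Finset.mem_powersetCard.1 this.1, this.2⟩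
      have hU : (M'.biUnion id).card = 2 * (s + 1) := by
        have hsum : ∑ e ∈ M', (id e).card = ∑ e ∈ M', 2 :=
          Finset.sum_congr rfl (fun e he => (hN e he).1.2)
        rw [Finset.card_biUnion (t := id) (fun a ha b hb hab => hdM a (hM' ha) b (hM' hb) hab),
          hsum, Finset.sum_const, hcM']
        simp [mul_comm]
      have hUs : M'.biUnion id ⊆ c j := by
        intro x hx
        obtain ⟨e, he, hxe⟩ := Finset.mem_biUnion.1 hx
        exact (hN e he).1.1 hxe
      have hle := Finset.card_le_card hUs
      have hsd := Finset.card_sdiff_of_subset hUs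
      refine cover j hj (M' ∪ (c j \ M'.biUnion id).image (fun x => {x})) ?_ ?_ ?_
      · have h1 := Finset.card_union_le M' ((c j \ M'.biUnion id).image (fun x => ({x} : Finset ρ)))
        have h2 : ((c j \ M'.biUnion id).image (fun x => ({x} : Finset ρ))).card ≤ _ :=
          Finset.card_image_le
        omega
      · intro e he
        rcases Finset.mem_union.1 he with he | he
        · exact (hN e he).2
        · obtain ⟨x, hx, rfl⟩ := Finset.mem_image.1 he
          simpa using hiso j hj x (Finset.mem_sdiff.1 hx).1
      · intro x hx
        by_cases hxM : x ∈ M'.biUnion id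
        · obtain ⟨e, he, hxe⟩ := Finset.mem_biUnion.1 hxM
          exact Finset.mem_biUnion.2 ⟨e, Finset.mem_union_left _ he, hxe⟩
        · exact Finset.mem_biUnion.2 ⟨{x}, Finset.mem_union_right _
            (Finset.mem_image_of_mem _ (Finset.mem_sdiff.2 ⟨hx, hxM⟩)), by simp⟩
    obtain ⟨i, hi, he⟩ := erdos_gallai' (c j) s (N j) (Finset.filter_subset _ _) hnu
    by_contra hle
    apply hcon
    refine numeric d (c j).card s i (N j).card R.card C hC hC1 hC2 hd hs (hsmall j hj) hi he ?_
    have h1 : (((N j).card + (P j).card : ℕ) : ℝ) = ((c j).card.choose 2 : ℕ) := by rw [hNP]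
    have h2 : ((2 * (P j).card : ℕ) : ℝ) ≤ R.card := by exact_mod_cast not_lt.1 hle
    push_cast at h1 h2
    linarith
  have hdisj : ∀ a ∈ I, ∀ b ∈ I, a ≠ b → Disjoint (P a) (P b) := by
    intro a ha b hb hab
    rw [Finset.disjoint_left]
    intro e h1 h2
    exact (Finset.mem_filter.1 h1).2
      ⟨b, hb, hab.symm, (Finset.mem_powersetCard.1 (Finset.mem_filter.1 h2).1).1⟩
  have htot : ∑ j ∈ I, (P j).card ≤ R.card.choose 2 := by
    rw [← Finset.card_biUnion hdisj, ← Finset.card_powersetCard]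
    apply Finset.card_le_card
    intro e he
    obtain ⟨j, hj, he⟩ := Finset.mem_biUnion.1 he
    have := Finset.mem_powersetCard.1 (Finset.mem_filter.1 he).1
    exact Finset.mem_powersetCard.2 ⟨this.1.trans (hc j hj), this.2⟩
  have h1 : I.card * (R.card + 1) ≤ ∑ j ∈ I, 2 * (P j).card := by
    rw [← smul_eq_mul]
    exact Finset.card_nsmul_le_sum _ _ _ (fun j hj => hP j hj)
  rw [← Finset.mul_sum] at h1
  have h2 : 2 * R.card.choose 2 ≤ R.card * R.card := by
    rw [Nat.choose_two_right]
    exact (Nat.mul_div_le _ _).trans (Nat.mul_le_mul_left _ (Nat.sub_le _ _))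
  nlinarith

lemma general {ι ρ : Type*} [DecidableEq ι] [DecidableEq ρ] (C : ℝ)
    (hC : 12 * C ^ 2 = 15 * C - 4) (hC1 : 0.86 < C) (hC2 : C < 0.87) (d : ℕ) :
    ∀ (r : ℕ) (c : ι → Finset ρ) (I : Finset ι) (R : Finset ρ), R.card = r →
    (∀ j ∈ I, c j ⊆ R) → R.card < I.card →
    (∀ j ∈ I, ∀ S ⊆ I, j ∉ S → S.card ≤ d → ¬ c j ⊆ S.biUnion c) →
    C * (d : ℝ) ^ 2 ≤ (R.card : ℝ) := by
  induction d with
  | zero => intros; simp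
  | succ d ihd =>
    intro r
    induction r with
    | zero =>
      intro c I R hr hc hcard hdis
      obtain ⟨j, hj⟩ := Finset.card_pos.1 (by omega : 0 < I.card)
      exfalso
      refine hdis j hj ∅ (by simp) (by simp) (by simp) ?_
      have := hc j hj
      rw [Finset.card_eq_zero.1 hr] at this
      simpa using this
    | succ r ihr =>
      intro c I R hr hc hcard hdis
      by_cases hbig : ∃ j ∈ I, C * (2 * ((d + 1 : ℕ) : ℝ) - 1) ≤ (c j).card
      · obtain ⟨j0, hj0, hbig⟩ := hbig
        have hpos : 0 < (c j0).card := by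
          have h0 : (0 : ℝ) ≤ d := Nat.cast_nonneg _
          have : (0 : ℝ) < (c j0).card := by push_cast at hbig; nlinarith
          exact_mod_cast this
        have hle := Finset.card_le_card (hc j0 hj0)
        have hR := Finset.card_sdiff_of_subset (hc j0 hj0)
        have hI := Finset.card_erase_of_mem hj0
        have := ihd _ (fun j => c j \ c j0) (I.erase j0) (R \ c j0) rfl
          (fun j hj => Finset.sdiff_subset_sdiff (hc j (Finset.mem_of_mem_erase hj)) le_rfl)
          (by omega) (by
            intro j hj S hS hjS hSd hsub
            have hj' := Finset.mem_erase.1 hj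
            refine hdis j hj'.2 (insert j0 S) ?_ ?_ ?_ ?_
            · intro x hx
              rcases Finset.mem_insert.1 hx with rfl | hx
              · exact hj0
              · exact Finset.mem_of_mem_erase (hS hx)
            · simp [hj'.1, hjS]
            · exact (Finset.card_insert_le _ _).trans (by omega)
            · intro x hx
              by_cases hx0 : x ∈ c j0
              · exact Finset.mem_biUnion.2 ⟨j0, by simp, hx0⟩
              · obtain ⟨l, hl, hxl⟩ := Finset.mem_biUnion.1 (hsub (Finset.mem_sdiff.2 ⟨hx, hx0⟩))
                exact Finset.mem_biUnion.2 ⟨l, Finset.mem_insert_of_mem hl,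
                  (Finset.mem_sdiff.1 hxl).1⟩)
        rw [hR, Nat.cast_sub hle] at this
        push_cast at hbig ⊢
        nlinarith
      by_cases hiso : ∀ j ∈ I, ∀ x ∈ c j, ∃ j' ∈ I, j' ≠ j ∧ x ∈ c j'
      · push Not at hbig
        exact main_step C hC hC1 hC2 (d + 1) (by omega) c I R hc hcard hdis hiso hbig
      · push Not at hiso
        obtain ⟨j0, hj0, x, hx, hpriv⟩ := hiso
        have hxR := hc j0 hj0 hx
        have hR := Finset.card_erase_of_mem hxR
        have hI := Finset.card_erase_of_mem hj0
        have := ihr c (I.erase j0) (R.erase x) (by omega)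
          (by
            intro j hj y hy
            have hj' := Finset.mem_erase.1 hj
            refine Finset.mem_erase.2 ⟨?_, hc j hj'.2 hy⟩
            rintro rfl
            exact hpriv j hj'.2 hj'.1 hy)
          (by omega)
          (fun j hj S hS => hdis j (Finset.mem_of_mem_erase hj) S
            (hS.trans (Finset.erase_subset _ _)))
        refine this.trans ?_
        exact_mod_cast Finset.card_le_card (Finset.erase_subset _ _)

/-- If a `t × n` binary matrix with `n > t` is `d`-disjunct,
then `t ≥ ((15 + √33)/24) · d²`. -/
theorem disjunct_general_bound
    (d t n : ℕ) (hd : 1 ≤ d) (hn : n > t)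
    (col : Fin n → Finset (Fin t))
    (hdis : Disjunct d col) :
    ((15 + Real.sqrt 33) / 24) * (d : ℝ) ^ 2 ≤ (t : ℝ) := by
  have h33 : Real.sqrt 33 ^ 2 = 33 := Real.sq_sqrt (by norm_num)
  have h0 : 0 ≤ Real.sqrt 33 := Real.sqrt_nonneg _
  have hl : 5.74 < Real.sqrt 33 := by nlinarith
  have hu : Real.sqrt 33 < 5.75 := by nlinarith
  have := general ((15 + Real.sqrt 33) / 24) (by nlinarith) (by linarith) (by linarith) d _ col
    Finset.univ Finset.univ rfl (fun _ _ => Finset.subset_univ _) (by simpa using hn)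
    (fun j _ S _ => hdis j S)
  simpa using this
end

section
/- Let d ≥ 1 and let M be a t×n binary matrix with n > t that is d-disjunct and that has an isolated column. Then t > T(d), where T(d) denotes the minimal number of rows t' such that there exists a t'×n' d-disjunct binary matrix with n' > t'. -/
open Finset

/-- `Tmin d` is the minimal number of rows `t'` such that there exists a
`t' × n'` `d`-disjunct binary matrix with `n' > t'`. -/
noncomputable def Tmin (d : ℕ) : ℕ :=
  sInf {t' : ℕ | ∃ n' : ℕ, n' > t' ∧ ∃ col : Fin n' → Finset (Fin t'), Disjunct d col}

/-- A `t × n` `d`-disjunct matrix with `n > t` having an isolated column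
satisfies `t > T(d)`. -/
theorem isolated_column_strict_bound
    (d t n : ℕ) (hd : 1 ≤ d) (hn : n > t)
    (col : Fin n → Finset (Fin t))
    (hdis : Disjunct d col)
    (hiso : ∃ j, IsolatedCol col j) :
    t > Tmin d := by
  obtain ⟨j, i, hij, huniq⟩ := hiso
  cases t with
  | zero => exact i.elim0
  | succ s =>
    cases n with
    | zero => exact j.elim0
    | succ m =>
      refine Nat.lt_succ_of_le (Nat.sInf_le ⟨m, by omega,
        fun k => Finset.univ.filter (fun r => i.succAbove r ∈ col (j.succAbove k)), ?_⟩)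
      intro k S hk hS hsub
      refine hdis (j.succAbove k) (S.map j.succAboveEmb) ?_ (by simpa using hS) ?_
      · simpa using hk
      · intro x hx
        by_cases hxi : x = i
        · subst hxi
          exact absurd (huniq _ hx) (Fin.succAbove_ne j k)
        · obtain ⟨r, rfl⟩ := Fin.exists_succAbove_eq hxi
          have h := hsub (Finset.mem_filter.2 ⟨Finset.mem_univ r, hx⟩)
          obtain ⟨l, hl, hr⟩ := Finset.mem_biUnion.1 h
          exact Finset.mem_biUnion.2 ⟨j.succAbove l, Finset.mem_map.2 ⟨l, hl, rfl⟩,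
            (Finset.mem_filter.1 hr).2⟩
end

section
/- Let d ≥ 1 and let M be a t×n binary matrix with n > t that is d-disjunct and that has an isolated column c containing exactly r_c ≥ 1 isolated rows. Then t ≥ T(d) + r_c, where T(d) denotes the minimal number of rows t' such that there exists a t'×n' d-disjunct binary matrix with n' > t'. -/
open Finset

/-- A `t × n` `d`-disjunct matrix with `n > t` having an isolated column `c`
containing exactly `rc ≥ 1` isolated rows satisfies `t ≥ T(d) + rc`. -/
theorem isolated_column_quantitative_bound
    (d t n : ℕ) (hd : 1 ≤ d) (hn : n > t)
    (col : Fin n → Finset (Fin t))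
    (hdis : Disjunct d col)
    (c : Fin n) (rc : ℕ) (hrc : 1 ≤ rc)
    (hcount : ((col c).filter (fun i => ∀ j', i ∈ col j' → j' = c)).card = rc) :
    t ≥ Tmin d + rc := by
  classical
  set R := (col c).filter (fun i => ∀ j', i ∈ col j' → j' = c) with hR
  have hRt : R.card ≤ t := by simpa using Finset.card_le_univ R
  have e : Fin (t - rc) ≃ {i : Fin t // i ∉ R} := by
    refine (Fintype.equivFinOfCardEq ?_).symm
    rw [Fintype.card_subtype_compl]
    simp [hcount]
  have g : Fin (n - 1) ≃ {j : Fin n // j ≠ c} := by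
    refine (Fintype.equivFinOfCardEq ?_).symm
    simp
  have hT : Tmin d ≤ t - rc := by
    apply Nat.sInf_le
    refine ⟨n - 1, by omega,
      fun j => Finset.univ.filter (fun i => (e i).1 ∈ col (g j).1), ?_⟩
    intro j S hjS hS hsub
    refine hdis (g j).1 (S.image (fun k => (g k).1)) ?_
      (Finset.card_image_le.trans hS) ?_
    · intro h
      obtain ⟨k, hk, hkj⟩ := Finset.mem_image.1 h
      have : k = j := g.injective (Subtype.ext hkj)
      exact hjS (this ▸ hk)
    · intro i hi
      have hiR : i ∉ R := by
        intro h
        exact (g j).2 ((Finset.mem_filter.1 h).2 _ hi)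
      obtain ⟨x, hx⟩ := e.surjective ⟨i, hiR⟩
      have hx1 : (e x).1 = i := by rw [hx]
      have := hsub (show x ∈ _ from Finset.mem_filter.2
        ⟨Finset.mem_univ x, by rw [hx1]; exact hi⟩)
      obtain ⟨k, hk, hxk⟩ := Finset.mem_biUnion.1 this
      have h2 := (Finset.mem_filter.1 hxk).2
      rw [hx1] at h2
      exact Finset.mem_biUnion.2 ⟨_, Finset.mem_image_of_mem _ hk, h2⟩
  omega
end

section
/- Let d ≥ 1 and let M be a t×n binary matrix that is d-disjunct, has no isolated columns, and in which every column has weight exactly d+1. Then any two distinct columns of M intersect in at most one row. -/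
open Finset

/-- In a `d`-disjunct matrix with no isolated columns in which every column
has weight exactly `d + 1`, any two distinct columns intersect in at most one row. -/
theorem disjunct_constant_weight_pairwise_intersection
    (d t n : ℕ) (hd : 1 ≤ d)
    (col : Fin n → Finset (Fin t))
    (hdis : Disjunct d col)
    (hiso : ∀ j, ¬ IsolatedCol col j)
    (hw : ∀ j, (col j).card = d + 1) :
    ∀ j j' : Fin n, j ≠ j' → (col j ∩ col j').card ≤ 1 := by
  intro j j' hne
  by_contra hlt
  have hex : ∀ i ∈ col j, ∃ k, i ∈ col k ∧ k ≠ j := by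
    intro i hi
    by_contra h
    push Not at h
    exact hiso j ⟨i, hi, h⟩
  have : Nonempty (Fin n) := ⟨j⟩
  choose! f hf using hex
  refine hdis j (insert j' ((col j \ col j').image f)) ?_ ?_ ?_
  · intro h
    rcases Finset.mem_insert.1 h with h | h
    · exact hne h
    · obtain ⟨i, hi, hij⟩ := Finset.mem_image.1 h
      exact (hf i (Finset.mem_sdiff.1 hi).1).2 hij
  · have h1 := Finset.card_insert_le j' ((col j \ col j').image f)
    have h2 := Finset.card_image_le (s := col j \ col j') (f := f)
    have h3 := Finset.card_sdiff_add_card_inter (col j) (col j')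
    have h4 := hw j
    omega
  · intro i hi
    rw [Finset.mem_biUnion]
    by_cases h : i ∈ col j'
    · exact ⟨j', Finset.mem_insert_self _ _, h⟩
    · exact ⟨f i, Finset.mem_insert_of_mem
        (Finset.mem_image_of_mem f (Finset.mem_sdiff.2 ⟨hi, h⟩)), (hf i hi).1⟩
end

section
/- Let K be a set of k elements and let G be a family of 2-element subsets of K whose matching number satisfies v(G) ≤ μ, where k ≥ 2μ+1. Then |G| ≤ max{ C(2μ+1, 2), C(k, 2) − C(k−μ, 2) }, where C(a,b) denotes the binomial coefficient. -/
open Finset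

namespace EGaux

variable {k : ℕ}

/-- Swap the points `i` and `j` in a set. -/
def sw (i j : Fin k) (e : Finset (Fin k)) : Finset (Fin k) := e.image (Equiv.swap i j)

lemma mem_sw (i j : Fin k) (e : Finset (Fin k)) (x : Fin k) :
    x ∈ sw i j e ↔ Equiv.swap i j x ∈ e := by
  unfold sw
  rw [mem_image]
  constructor
  · rintro ⟨a, ha, rfl⟩
    simpa using ha
  · intro h
    exact ⟨_, h, by simp⟩

lemma sw_sw (i j : Fin k) (e : Finset (Fin k)) : sw i j (sw i j e) = e := by
  ext x
  simp [mem_sw]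

lemma sw_inj (i j : Fin k) : Function.Injective (sw i j) :=
  fun a b h => by rw [← sw_sw i j a, h, sw_sw]

lemma card_sw (i j : Fin k) (e : Finset (Fin k)) : (sw i j e).card = e.card :=
  card_image_of_injective _ (Equiv.injective _)

lemma sw_eq (i j : Fin k) (e : Finset (Fin k)) (hi : i ∉ e) (hj : j ∉ e) : sw i j e = e := by
  ext x
  rw [mem_sw]
  by_cases h1 : x = i
  · subst h1; simp [hi, hj]
  by_cases h2 : x = j
  · subst h2; simp [hi, hj]
  rw [Equiv.swap_apply_of_ne_of_ne h1 h2]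

/-- The matching condition. -/
def Good (μ : ℕ) (G : Finset (Finset (Fin k))) : Prop :=
  (∀ e ∈ G, e.card = 2) ∧
  (∀ M ⊆ G, (M : Set (Finset (Fin k))).PairwiseDisjoint id → M.card ≤ μ)

/-- Weight of a set. -/
def wt (e : Finset (Fin k)) : ℕ := ∑ x ∈ e, (x : ℕ)

lemma wt_sw (i j : Fin k) (hij : i < j) (e : Finset (Fin k)) (hj : j ∈ e) (hi : i ∉ e) :
    wt (sw i j e) < wt e := by
  unfold wt sw
  rw [sum_image (by intro a _ b _ h; exact (Equiv.injective _) h)]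
  apply sum_lt_sum
  · intro x hx
    by_cases h1 : x = i
    · subst h1; exact absurd hx hi
    by_cases h2 : x = j
    · subst h2; rw [Equiv.swap_apply_right]; exact hij.le
    rw [Equiv.swap_apply_of_ne_of_ne h1 h2]
  · exact ⟨j, hj, by rw [Equiv.swap_apply_right]; exact hij⟩

open Classical in
/-- The shift map. -/
noncomputable def phi (G : Finset (Finset (Fin k))) (i j : Fin k) (e : Finset (Fin k)) :
    Finset (Fin k) :=
  if j ∈ e ∧ i ∉ e ∧ sw i j e ∉ G then sw i j e else e

lemma phi_injOn (G : Finset (Finset (Fin k))) (i j : Fin k) :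
    Set.InjOn (phi G i j) (G : Set (Finset (Fin k))) := by
  intro a ha b hb h
  unfold phi at h
  split_ifs at h with h1 h2 h2
  · exact sw_inj i j h
  · exact absurd (h ▸ hb) h1.2.2
  · exact absurd (h ▸ ha) h2.2.2
  · exact h

open Classical in
lemma good_shift {μ : ℕ} {G : Finset (Finset (Fin k))} (hG : Good μ G) (i j : Fin k) :
    Good μ (G.image (phi G i j)) := by
  constructor
  · intro e he
    obtain ⟨f, hf, rfl⟩ := mem_image.1 he
    unfold phi
    split_ifs
    · rw [card_sw]; exact hG.1 f hf
    · exact hG.1 f hf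
  · intro M hM hd
    by_cases hMG : M ⊆ G
    · exact hG.2 M hMG hd
    obtain ⟨e, heM, heG⟩ := not_subset.1 hMG
    -- elements not in `G`
    have key : ∀ m ∈ M, m ∉ G → i ∈ m ∧ sw i j m ∈ G := by
      intro m hm hmG
      obtain ⟨f, hf, hfm⟩ := mem_image.1 (hM hm)
      unfold phi at hfm
      split_ifs at hfm with h
      · subst hfm
        refine ⟨?_, by rw [sw_sw]; exact hf⟩
        rw [mem_sw, Equiv.swap_apply_left]; exact h.1
      · exact absurd (hfm ▸ hf) hmG
    have key2 : ∀ m ∈ M, j ∈ m → i ∉ m → sw i j m ∈ G := by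
      intro m hm hj hi
      obtain ⟨f, hf, hfm⟩ := mem_image.1 (hM hm)
      unfold phi at hfm
      split_ifs at hfm with h
      · subst hfm; rw [sw_sw]; exact hf
      · subst hfm
        by_contra hc
        exact h ⟨hj, hi, hc⟩
    have hsub : M.image (sw i j) ⊆ G := by
      intro x hx
      obtain ⟨m, hm, rfl⟩ := mem_image.1 hx
      by_cases hme : m = e
      · subst hme; exact (key m hm heG).2
      have him : i ∉ m := by
        intro him
        have := hd hm heM hme
        exact (Finset.disjoint_left.1 this) him (key e heM heG).1
      by_cases hjm : j ∈ m
      · exact key2 m hm hjm him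
      · rw [sw_eq i j m him hjm]
        by_contra hc
        exact him (key m hm hc).1
    have := hG.2 _ hsub (by
      intro a ha b hb hab
      rw [mem_coe, mem_image] at ha hb
      obtain ⟨a, ha, rfl⟩ := ha
      obtain ⟨b, hb, rfl⟩ := hb
      have hne : a ≠ b := fun h => hab (by rw [h])
      have hdab := hd ha hb hne
      change Disjoint (sw i j a) (sw i j b)
      change Disjoint a b at hdab
      rw [Finset.disjoint_left] at hdab ⊢
      intro x hx hx'
      rw [mem_sw] at hx hx'
      exact hdab hx hx')
    rwa [card_image_of_injective _ (sw_inj i j)] at this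

open Classical in
lemma exists_stable {μ : ℕ} (n : ℕ) : ∀ G : Finset (Finset (Fin k)), ∑ e ∈ G, wt e = n → Good μ G →
    ∃ H : Finset (Finset (Fin k)), H.card = G.card ∧ Good μ H ∧
      ∀ i j : Fin k, i < j → ∀ e ∈ H, j ∈ e → i ∉ e → sw i j e ∈ H := by
  induction n using Nat.strong_induction_on with
  | _ n ih =>
    intro G hn hG
    by_cases hst : ∀ i j : Fin k, i < j → ∀ e ∈ G, j ∈ e → i ∉ e → sw i j e ∈ G
    · exact ⟨G, rfl, hG, hst⟩
    push Not at hst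
    obtain ⟨i, j, hij, e, he, hj, hi, hs⟩ := hst
    have hlt : ∑ f ∈ G.image (phi G i j), wt f < n := by
      rw [sum_image (phi_injOn G i j), ← hn]
      apply sum_lt_sum
      · intro f hf
        unfold phi
        split_ifs with h
        · exact (wt_sw i j hij f h.1 h.2.1).le
        · exact le_rfl
      · refine ⟨e, he, ?_⟩
        unfold phi
        rw [if_pos ⟨hj, hi, hs⟩]
        exact wt_sw i j hij e hj hi
    obtain ⟨H, h1, h2, h3⟩ := ih _ hlt _ rfl (good_shift hG i j)
    exact ⟨H, by rw [h1, card_image_of_injOn (phi_injOn G i j)], h2, h3⟩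

lemma sw_pair_left (c a b : Fin k) (h1 : b ≠ c) (h2 : b ≠ a) : sw c a {a, b} = {c, b} := by
  unfold sw
  rw [image_insert, image_singleton, Equiv.swap_apply_right, Equiv.swap_apply_of_ne_of_ne h1 h2]

lemma dom {H : Finset (Finset (Fin k))}
    (hs : ∀ i j : Fin k, i < j → ∀ e ∈ H, j ∈ e → i ∉ e → sw i j e ∈ H)
    (a b c d : Fin k) (hab : a < b) (hcd : c < d) (hca : c ≤ a) (hdb : d ≤ b)
    (h : {a, b} ∈ H) : ({c, d} : Finset (Fin k)) ∈ H := by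
  have h1 : ({c, b} : Finset (Fin k)) ∈ H := by
    rcases hca.eq_or_lt with rfl | hlt
    · exact h
    · rw [← sw_pair_left c a b (hlt.trans hab).ne' hab.ne']
      exact hs c a hlt _ h (by simp) (by simp [hlt.ne, (hlt.trans hab).ne])
  rcases hdb.eq_or_lt with rfl | hlt
  · exact h1
  · rw [pair_comm] at h1 ⊢
    rw [← sw_pair_left d b c hcd.ne (hcd.trans hlt).ne]
    exact hs d b hlt _ h1 (by simp) (by simp [hlt.ne, hcd.ne'])

lemma numeric (k μ s : ℕ) (hk : 2 * μ + 2 ≤ k) (hs : s ≤ μ) :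
    Nat.choose k 2 - Nat.choose (k - s) 2 + Nat.choose (2 * μ + 1 - 2 * s) 2 ≤
      max (Nat.choose (2 * μ + 1) 2) (Nat.choose k 2 - Nat.choose (k - μ) 2) := by
  obtain ⟨t, rfl⟩ := Nat.exists_eq_add_of_le hs
  obtain ⟨m, rfl⟩ := Nat.exists_eq_add_of_le hk
  have e1 : 2 * (s + t) + 2 + m - s = s + 2 * t + 2 + m := by omega
  have e2 : 2 * (s + t) + 1 - 2 * s = 2 * t + 1 := by omega
  have e3 : 2 * (s + t) + 2 + m - (s + t) = s + t + 2 + m := by omega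
  rw [e1, e2, e3]
  have l1 : Nat.choose (s + 2 * t + 2 + m) 2 ≤ Nat.choose (2 * (s + t) + 2 + m) 2 :=
    Nat.choose_le_choose _ (by omega)
  have l2 : Nat.choose (s + t + 2 + m) 2 ≤ Nat.choose (2 * (s + t) + 2 + m) 2 :=
    Nat.choose_le_choose _ (by omega)
  rw [le_max_iff]
  rw [← Nat.cast_le (α := ℚ), ← Nat.cast_le (α := ℚ)]
  push_cast [Nat.cast_sub l1, Nat.cast_sub l2, Nat.cast_choose_two]
  have hs0 : (0 : ℚ) ≤ s := Nat.cast_nonneg _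
  have ht0 : (0 : ℚ) ≤ t := Nat.cast_nonneg _
  have hm0 : (0 : ℚ) ≤ m := Nat.cast_nonneg _
  generalize (s : ℚ) = s at *
  generalize (t : ℚ) = t at *
  generalize (m : ℚ) = m at *
  -- L(s) = k - 3/2 - 4 μ + 3 s / 2
  by_cases hL : (2 * (s + t) + 2 + m) - 3 / 2 - 4 * (s + t) + 3 * s / 2 ≤ 0
  · left
    nlinarith [mul_nonneg hs0 (sub_nonneg.2 hL)]
  · right
    push Not at hL
    nlinarith [mul_nonneg ht0 hL.le, mul_nonneg ht0 ht0, mul_nonneg ht0 hs0]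

lemma stable_bound {μ : ℕ} (hk : 2 * μ + 2 ≤ k) {H : Finset (Finset (Fin k))} (hH : Good μ H)
    (hs : ∀ i j : Fin k, i < j → ∀ e ∈ H, j ∈ e → i ∉ e → sw i j e ∈ H) :
    H.card ≤ max (Nat.choose (2 * μ + 1) 2) (Nat.choose k 2 - Nat.choose (k - μ) 2) := by
  have hex : ∃ s : ℕ, ∃ h : s ≤ μ,
      ({⟨s, by omega⟩, ⟨2 * μ + 1 - s, by omega⟩} : Finset (Fin k)) ∉ H := by
    by_contra hc
    push Not at hc
    let F : Fin (μ + 1) → Finset (Fin k) := fun s =>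
      {⟨s, by omega⟩, ⟨2 * μ + 1 - s, by omega⟩}
    have hF : ∀ a b, a ≠ b → Disjoint (F a) (F b) := by
      intro a b hab
      have : (a : ℕ) ≠ b := fun h => hab (Fin.ext h)
      have ha := a.2
      have hb := b.2
      simp only [F, disjoint_insert_left, disjoint_singleton_left, mem_insert, mem_singleton,
        Fin.mk.injEq]
      omega
    have hinj : Function.Injective F := by
      intro a b h
      by_contra hab
      have h1 := hF a b hab
      rw [h, disjoint_self_iff_empty] at h1
      simp [F] at h1
    have h2 := hH.2 (univ.image F) (by
      intro x hx
      obtain ⟨a, -, rfl⟩ := mem_image.1 hx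
      exact hc a (by omega)) (by
      intro x hx y hy hxy
      rw [mem_coe, mem_image] at hx hy
      obtain ⟨a, -, rfl⟩ := hx
      obtain ⟨b, -, rfl⟩ := hy
      exact hF a b (fun h => hxy (by rw [h])))
    rw [card_image_of_injective _ hinj] at h2
    simp at h2
  obtain ⟨s, hsμ, hsH⟩ := hex
  refine le_trans ?_ (numeric k μ s hk hsμ)
  let p : Fin k := ⟨s, by omega⟩
  let q : Fin k := ⟨2 * μ + 1 - s, by omega⟩
  have hsub : H ⊆ (powersetCard 2 univ \ powersetCard 2 (Ici p)) ∪ powersetCard 2 (Ico p q) := by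
    intro e he
    have hc := hH.1 e he
    obtain ⟨x, y, hxy, rfl⟩ := card_eq_two.1 hc
    have main : ∀ a b : Fin k, a < b → ({a, b} : Finset (Fin k)) ∈ H → a < p ∨ b < q := by
      intro a b hab h
      by_contra hcon
      push Not at hcon
      exact hsH (dom hs a b p q hab (by simp only [p, q, Fin.mk_lt_mk]; omega) hcon.1 hcon.2 h)
    simp only [mem_union, mem_sdiff, mem_powersetCard, subset_univ, hc, insert_subset_iff,
      singleton_subset_iff, mem_Ici, mem_Ico, true_and, and_true]
    rcases lt_or_gt_of_ne hxy with h | h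
    · have := main x y h he
      grind
    · have := main y x h (by rwa [pair_comm])
      grind
  refine (card_le_card hsub).trans ((card_union_le _ _).trans ?_)
  rw [card_sdiff_of_subset (powersetCard_mono (subset_univ _)), card_powersetCard,
    card_powersetCard, card_powersetCard]
  have e2 : 2 * μ + 1 - s - s = 2 * μ + 1 - 2 * s := by omega
  simp [p, q, e2]

end EGaux

/-- Erdős–Gallai: a family `G` of 2-element subsets of a `k`-element set with
matching number at most `μ`, where `k ≥ 2μ + 1`, has at most
`max (C(2μ+1, 2)) (C(k,2) − C(k−μ,2))` members. -/
theorem erdos_gallai_matching_bound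
    (k μ : ℕ) (hk : k ≥ 2 * μ + 1)
    (G : Finset (Finset (Fin k)))
    (h2 : ∀ e ∈ G, e.card = 2)
    (hmatch : ∀ M ⊆ G, (M : Set (Finset (Fin k))).PairwiseDisjoint id → M.card ≤ μ) :
    G.card ≤ max (Nat.choose (2 * μ + 1) 2) (Nat.choose k 2 - Nat.choose (k - μ) 2) := by
  rcases Nat.eq_or_lt_of_le hk with h | h
  · refine le_trans ?_ (le_max_left _ _)
    have hsub : G ⊆ powersetCard 2 univ := fun e he =>
      mem_powersetCard.2 ⟨subset_univ _, h2 e he⟩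
    have := card_le_card hsub
    rw [card_powersetCard, card_univ, Fintype.card_fin] at this
    rwa [h]
  · obtain ⟨H, hc, hg, hs⟩ := EGaux.exists_stable (μ := μ) _ G rfl ⟨h2, hmatch⟩
    rw [← hc]
    exact EGaux.stable_bound h hg hs
end

section
/- Let d ≥ 1, let M be a t×n binary matrix that is d-disjunct and has no isolated columns, and let c be a column of M with weight |c| = d+s where 1 ≤ s ≤ d−1. Then the family N(c) of non-private 2-subsets of c contains no s pairwise disjoint members, i.e., its matching number is at most s−1. -/
open Finset

/-- In a `d`-disjunct matrix with no isolated columns, for a column `c` of weight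
`d + s` with `1 ≤ s ≤ d − 1`, the family `N(c)` of non-private 2-subsets of `c`
contains no `s` pairwise disjoint members (its matching number is at most `s − 1`). -/
theorem nonprivate_pairs_matching_bound
    (d s t n : ℕ) (hd : 1 ≤ d) (hs1 : 1 ≤ s) (hs2 : s ≤ d - 1)
    (col : Fin n → Finset (Fin t))
    (hdis : Disjunct d col)
    (hiso : ∀ j, ¬ IsolatedCol col j)
    (c : Fin n) (hc : (col c).card = d + s) :
    ∀ M ⊆ ((col c).powersetCard 2).filter (fun e => ∃ j', j' ≠ c ∧ e ⊆ col j'),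
      (M : Set (Finset (Fin t))).PairwiseDisjoint id → M.card ≤ s - 1 := by
  intro M hM hdisj
  by_contra hlt
  obtain ⟨P, hPM, hPc⟩ := Finset.exists_subset_card_eq (s := M) (n := s) (by omega)
  have hP : ∀ e : Finset (Fin t), ∃ j', e ∈ P →
      (e ⊆ col c ∧ e.card = 2) ∧ j' ≠ c ∧ e ⊆ col j' := by
    intro e
    by_cases he : e ∈ P
    · have h := hM (hPM he)
      rw [Finset.mem_filter, Finset.mem_powersetCard] at h
      obtain ⟨h1, j', h2⟩ := h
      exact ⟨j', fun _ => ⟨h1, h2⟩⟩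
    · exact ⟨c, fun h => absurd h he⟩
  choose f hf using hP
  have hR : ∀ i : Fin t, ∃ j', i ∈ col c → j' ≠ c ∧ i ∈ col j' := by
    intro i
    by_cases hi : i ∈ col c
    · by_contra hcon
      push Not at hcon
      refine hiso c ⟨i, hi, fun j' hj' => ?_⟩
      by_contra hne
      exact (hcon j').2 hne hj'
    · exact ⟨c, fun h => absurd h hi⟩
  choose g hg using hR
  have hU : (P.biUnion id).card = 2 * s := by
    rw [Finset.card_biUnion (fun x hx y hy hxy => hdisj (hPM hx) (hPM hy) hxy),
      Finset.sum_const_nat (m := 2) (f := fun u => (id u).card) (fun e he => (hf e he).1.2), hPc, mul_comm]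
  have hUsub : P.biUnion id ⊆ col c :=
    Finset.biUnion_subset.2 (fun e he => (hf e he).1.1)
  have hD : (col c \ P.biUnion id).card = d + s - 2 * s := by
    rw [Finset.card_sdiff_of_subset hUsub, hc, hU]
  refine hdis c (P.image f ∪ (col c \ P.biUnion id).image g) ?_ ?_ ?_
  · intro h
    rcases Finset.mem_union.1 h with h | h
    · obtain ⟨e, he, hec⟩ := Finset.mem_image.1 h
      exact (hf e he).2.1 hec
    · obtain ⟨i, hi, hic⟩ := Finset.mem_image.1 h
      exact (hg i (Finset.mem_sdiff.1 hi).1).1 hic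
  · have h1 := Finset.card_union_le (P.image f) ((col c \ P.biUnion id).image g)
    have h2 : (P.image f).card ≤ P.card := Finset.card_image_le
    have h3 : ((col c \ P.biUnion id).image g).card ≤ _ := Finset.card_image_le
    omega
  · intro i hi
    rw [Finset.mem_biUnion]
    by_cases hiU : i ∈ P.biUnion id
    · obtain ⟨e, he, hie⟩ := Finset.mem_biUnion.1 hiU
      exact ⟨f e, Finset.mem_union_left _ (Finset.mem_image_of_mem f he), (hf e he).2.2 hie⟩
    · exact ⟨g i, Finset.mem_union_right _
        (Finset.mem_image_of_mem g (Finset.mem_sdiff.2 ⟨hi, hiU⟩)), (hg i hi).2⟩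
end

section
/- Let d ≥ 1, let M be a t×n binary matrix that is d-disjunct and has no isolated columns, and let c be a column of M with weight |c| = d+s where 1 ≤ s ≤ d−1. Then the number of non-private 2-subsets of c satisfies |N(c)| ≤ max{ C(2s−1, 2), C(d+s, 2) − C(d+1, 2) }, where C(a,b) denotes the binomial coefficient. -/
open Finset

/-- `A` contains a matching with `s` edges. -/
def HasMatch (A : Finset (Finset ℕ)) (s : ℕ) : Prop :=
  ∃ P ⊆ A, P.card = s ∧ ∀ e ∈ P, ∀ f ∈ P, e ≠ f → Disjoint e f

/-- the image of an edge under the transposition of `i` and `j`. -/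
def sw (i j : ℕ) (e : Finset ℕ) : Finset ℕ := e.map (Equiv.swap i j).toEmbedding

lemma sw_inj (i j : ℕ) : Function.Injective (sw i j) := Finset.map_injective _

lemma sw_sw (i j : ℕ) (e : Finset ℕ) : sw i j (sw i j e) = e := by
  ext x
  simp [sw, Finset.mem_map_equiv]

lemma mem_sw (i j x : ℕ) (e : Finset ℕ) : x ∈ sw i j e ↔ Equiv.swap i j x ∈ e := by
  simp [sw, Finset.mem_map_equiv]

lemma sw_eq (i j : ℕ) (e : Finset ℕ) (hi : i ∉ e) (hj : j ∉ e) : sw i j e = e := by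
  ext x
  rw [mem_sw]
  by_cases h1 : x = i
  · subst h1; simp [hi, hj]
  by_cases h2 : x = j
  · subst h2; simp [hi, hj]
  rw [Equiv.swap_apply_of_ne_of_ne h1 h2]

lemma sw_sum (i j : ℕ) (hij : i < j) (e : Finset ℕ) (hi : i ∉ e) (hj : j ∈ e) :
    ∑ x ∈ sw i j e, x < ∑ x ∈ e, x := by
  rw [sw, Finset.sum_map]
  apply Finset.sum_lt_sum
  · intro x hx
    by_cases h2 : x = j
    · subst h2; simp [hij.le]
    · have h1 : x ≠ i := by rintro rfl; exact hi hx
      simp [Equiv.swap_apply_of_ne_of_ne h1 h2]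
  · exact ⟨j, hj, by simpa using hij⟩

/-- the edges moved by the shift. -/
def moved (i j : ℕ) (A : Finset (Finset ℕ)) : Finset (Finset ℕ) :=
  A.filter (fun e => j ∈ e ∧ i ∉ e ∧ sw i j e ∉ A)

/-- the shift. -/
def shft (i j : ℕ) (A : Finset (Finset ℕ)) : Finset (Finset ℕ) :=
  (A \ moved i j A) ∪ (moved i j A).image (sw i j)

lemma shft_disj (i j : ℕ) (A : Finset (Finset ℕ)) :
    Disjoint (A \ moved i j A) ((moved i j A).image (sw i j)) := by
  rw [Finset.disjoint_left]
  intro e he he'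
  obtain ⟨f, hf, rfl⟩ := Finset.mem_image.1 he'
  exact (Finset.mem_filter.1 hf).2.2.2 (Finset.mem_sdiff.1 he).1

lemma moved_sub (i j : ℕ) (A : Finset (Finset ℕ)) : moved i j A ⊆ A := Finset.filter_subset _ _

lemma shft_card (i j : ℕ) (A : Finset (Finset ℕ)) : (shft i j A).card = A.card := by
  rw [shft, Finset.card_union_of_disjoint (shft_disj i j A),
    Finset.card_image_of_injective _ (sw_inj i j)]
  exact Finset.card_sdiff_add_card_eq_card (moved_sub i j A)

lemma shft_sum (i j : ℕ) (hij : i < j) (A : Finset (Finset ℕ)) (h : (moved i j A).Nonempty) :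
    ∑ e ∈ shft i j A, ∑ x ∈ e, x < ∑ e ∈ A, ∑ x ∈ e, x := by
  rw [shft, Finset.sum_union (shft_disj i j A), Finset.sum_image (fun x _ y _ h => sw_inj i j h),
    ← Finset.sum_sdiff (moved_sub i j A)]
  apply Nat.add_lt_add_left
  apply Finset.sum_lt_sum_of_nonempty h
  intro e he
  have := (Finset.mem_filter.1 he).2
  exact sw_sum i j hij e this.2.1 this.1

lemma shft_sub (i j n : ℕ) (hij : i < j) (A : Finset (Finset ℕ))
    (hA : A ⊆ (range n).powersetCard 2) : shft i j A ⊆ (range n).powersetCard 2 := by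
  intro e he
  rcases Finset.mem_union.1 he with he | he
  · exact hA (Finset.mem_sdiff.1 he).1
  · obtain ⟨f, hf, rfl⟩ := Finset.mem_image.1 he
    obtain ⟨hfA, hj, hi, -⟩ := Finset.mem_filter.1 hf
    have h := Finset.mem_powersetCard.1 (hA hfA)
    refine Finset.mem_powersetCard.2 ⟨?_, by simp [sw, h.2]⟩
    have hjn := Finset.mem_range.1 (h.1 hj)
    intro x hx
    rw [mem_sw] at hx
    by_cases h1 : x = i
    · rw [Finset.mem_range]; omega
    by_cases h2 : x = j
    · rw [Finset.mem_range]; omega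
    rw [Equiv.swap_apply_of_ne_of_ne h1 h2] at hx
    exact h.1 hx

lemma shft_match (i j s : ℕ) (A : Finset (Finset ℕ)) (h : HasMatch (shft i j A) s) :
    HasMatch A s := by
  obtain ⟨P, hP, hc, hd⟩ := h
  by_cases hPA : P ⊆ A
  · exact ⟨P, hPA, hc, hd⟩
  obtain ⟨e, heP, heA⟩ := Finset.not_subset.1 hPA
  have key : ∀ g ∈ P, g ∉ A → i ∈ g ∧ sw i j g ∈ A := by
    intro g hg hgA
    rcases Finset.mem_union.1 (hP hg) with h | h
    · exact absurd (Finset.mem_sdiff.1 h).1 hgA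
    · obtain ⟨f, hf, rfl⟩ := Finset.mem_image.1 h
      obtain ⟨hfA, hj, hi, -⟩ := Finset.mem_filter.1 hf
      rw [sw_sw, mem_sw]
      simpa using ⟨hj, hfA⟩
  have uniq : ∀ g ∈ P, i ∈ g → g = e := by
    intro g hg hig
    by_contra hne
    exact Finset.disjoint_left.1 (hd g hg e heP hne) hig (key e heP heA).1
  refine ⟨P.image (sw i j), ?_, ?_, ?_⟩
  · intro g' hg'
    obtain ⟨g, hg, rfl⟩ := Finset.mem_image.1 hg'
    by_cases hgA : g ∈ A
    · have hig : i ∉ g := fun h => heA (uniq g hg h ▸ hgA)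
      by_cases hjg : j ∈ g
      · rcases Finset.mem_union.1 (hP hg) with h | h
        · by_contra hcon
          exact (Finset.mem_sdiff.1 h).2 (Finset.mem_filter.2 ⟨hgA, hjg, hig, hcon⟩)
        · obtain ⟨f, hf, rfl⟩ := Finset.mem_image.1 h
          exact absurd hgA (Finset.mem_filter.1 hf).2.2.2
      · rw [sw_eq i j g hig hjg]; exact hgA
    · exact (key g hg hgA).2
  · rw [Finset.card_image_of_injective _ (sw_inj i j), hc]
  · intro a ha b hb hab
    obtain ⟨a, ha', rfl⟩ := Finset.mem_image.1 ha
    obtain ⟨b, hb', rfl⟩ := Finset.mem_image.1 hb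
    have hne : a ≠ b := fun h => hab (by rw [h])
    exact (Finset.disjoint_map _).2 (hd a ha' b hb' hne)

lemma exists_shifted_s8 (n s : ℕ) (m : ℕ) : ∀ A : Finset (Finset ℕ), ∑ e ∈ A, ∑ x ∈ e, x = m →
    A ⊆ (range n).powersetCard 2 → ¬ HasMatch A s →
    ∃ B : Finset (Finset ℕ), B.card = A.card ∧ B ⊆ (range n).powersetCard 2 ∧ ¬ HasMatch B s ∧
      ∀ i j, i < j → moved i j B = ∅ := by
  induction m using Nat.strong_induction_on with
  | _ m ih =>
    intro A hm hA hM
    by_cases h : ∀ i j, i < j → moved i j A = ∅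
    · exact ⟨A, rfl, hA, hM, h⟩
    push Not at h
    obtain ⟨i, j, hij, hne⟩ := h
    have hlt := shft_sum i j hij A hne
    obtain ⟨B, h1, h2⟩ := ih _ (hm ▸ hlt) (shft i j A) rfl (shft_sub i j n hij A hA)
      (fun h => hM (shft_match i j s A h))
    exact ⟨B, h1.trans (shft_card i j A), h2⟩

lemma arith (n s i : ℕ) (hn : 2 * s ≤ n) (hi : i < s) :
    (2 * s - 1 - i).choose 2 + i * (n - (2 * s - 1 - i)) ≤
      max ((2 * s - 1).choose 2) (n.choose 2 - (n - s + 1).choose 2) := by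
  obtain ⟨k, rfl⟩ : ∃ k, s = i + k + 1 := ⟨s - i - 1, by omega⟩
  obtain ⟨q, rfl⟩ : ∃ q, n = 2 * (i + k + 1) + q := ⟨n - 2 * (i + k + 1), by omega⟩
  have e1 : 2 * (i + k + 1) - 1 - i = i + 2 * k + 1 := by omega
  have e2 : 2 * (i + k + 1) + q - (i + 2 * k + 1) = i + 1 + q := by omega
  have e3 : 2 * (i + k + 1) - 1 = 2 * i + 2 * k + 1 := by omega
  have e4 : 2 * (i + k + 1) + q - (i + k + 1) + 1 = i + k + q + 2 := by omega
  rw [e1, e2, e3, e4]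
  have c1 : (((i + 2 * k + 1).choose 2 : ℕ) : ℚ) = (i + 2 * k + 1) * (i + 2 * k) / 2 := by
    rw [Nat.cast_choose_two]; push_cast; ring
  have c2 : (((2 * i + 2 * k + 1).choose 2 : ℕ) : ℚ) = (2 * i + 2 * k + 1) * (2 * i + 2 * k) / 2 := by
    rw [Nat.cast_choose_two]; push_cast; ring
  have c3 : (((2 * (i + k + 1) + q).choose 2 : ℕ) : ℚ)
      = (2 * (i + k + 1) + q) * (2 * (i + k + 1) + q - 1) / 2 := by
    rw [Nat.cast_choose_two]; push_cast; ring
  have c4 : (((i + k + q + 2).choose 2 : ℕ) : ℚ) = (i + k + q + 2) * (i + k + q + 1) / 2 := by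
    rw [Nat.cast_choose_two]; push_cast; ring
  rw [le_max_iff]
  have hi0 : (0 : ℚ) ≤ i := Nat.cast_nonneg i
  have hk0 : (0 : ℚ) ≤ k := Nat.cast_nonneg k
  rcases le_or_gt (2 * (q : ℚ) + 1) (i + 4 * k) with h | h
  · left
    rw [← Nat.cast_le (α := ℚ)]
    push_cast
    rw [c1, c2]
    nlinarith [mul_nonneg hi0 (sub_nonneg.2 h)]
  · right
    apply Nat.le_sub_of_add_le
    rw [← Nat.cast_le (α := ℚ)]
    push_cast
    rw [c1, c3, c4]
    nlinarith [mul_nonneg hk0 (sub_nonneg.2 h.le), mul_nonneg hk0 hk0, mul_nonneg hk0 hi0]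

lemma shifted_bound (n s : ℕ) (hn : 2 * s ≤ n) (A : Finset (Finset ℕ))
    (hA : A ⊆ (range n).powersetCard 2) (hM : ¬ HasMatch A s)
    (hS : ∀ i j, i < j → moved i j A = ∅) :
    A.card ≤ max ((2 * s - 1).choose 2) (n.choose 2 - (n - s + 1).choose 2) := by
  have step : ∀ i j y, i < j → y ≠ i → y ≠ j → ({j, y} : Finset ℕ) ∈ A → ({i, y} : Finset ℕ) ∈ A := by
    intro i j y hij hyi hyj he
    by_contra hcon
    have : ({j, y} : Finset ℕ) ∈ moved i j A := by
      refine Finset.mem_filter.2 ⟨he, by simp, by simp [hij.ne, hyi.symm], ?_⟩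
      have : sw i j {j, y} = {i, y} := by
        simp [sw, Equiv.swap_apply_of_ne_of_ne hyi hyj]
      rwa [this]
    rw [hS i j hij] at this
    simp at this
  have hex : ∃ i < s, ({i, 2 * s - 1 - i} : Finset ℕ) ∉ A := by
    by_contra hcon
    push Not at hcon
    apply hM
    have hdj : ∀ a < s, ∀ b < s, a ≠ b →
        Disjoint ({a, 2 * s - 1 - a} : Finset ℕ) {b, 2 * s - 1 - b} := by
      intro a ha b hb hab
      simp only [Finset.disjoint_insert_left, Finset.disjoint_singleton_left, Finset.mem_insert,
        Finset.mem_singleton]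
      omega
    refine ⟨(range s).image (fun i => ({i, 2 * s - 1 - i} : Finset ℕ)), ?_, ?_, ?_⟩
    · intro e he
      obtain ⟨i, hi, rfl⟩ := Finset.mem_image.1 he
      exact hcon i (Finset.mem_range.1 hi)
    · rw [Finset.card_image_of_injOn, Finset.card_range]
      intro a ha b hb hab
      by_contra hne
      have h1 := hdj a (by simpa using ha) b (by simpa using hb) hne
      simp only at hab
      rw [hab] at h1
      simp at h1
    · intro e he f hf hef
      obtain ⟨a, ha, rfl⟩ := Finset.mem_image.1 he
      obtain ⟨b, hb, rfl⟩ := Finset.mem_image.1 hf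
      exact hdj a (Finset.mem_range.1 ha) b (Finset.mem_range.1 hb) (fun h => hef (by rw [h]))
  obtain ⟨i, hi, hiA⟩ := hex
  refine le_trans ?_ (arith n s i hn hi)
  set r := 2 * s - 1 - i with hr
  have hsub : A ⊆ (range r).powersetCard 2 ∪
      ((range i) ×ˢ (range n \ range r)).image (fun p => ({p.1, p.2} : Finset ℕ)) := by
    intro e he
    have he2 := Finset.mem_powersetCard.1 (hA he)
    have hab : ∃ a b, a < b ∧ e = {a, b} := by
      obtain ⟨a, b, hne, rfl⟩ := Finset.card_eq_two.1 he2.2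
      rcases lt_or_gt_of_ne hne with h | h
      · exact ⟨a, b, h, rfl⟩
      · exact ⟨b, a, h, Finset.pair_comm a b⟩
    obtain ⟨a, b, hlt, rfl⟩ := hab
    have hbn : b < n := Finset.mem_range.1 (he2.1 (by simp))
    by_cases hbr : b < r
    · apply Finset.mem_union_left
      refine Finset.mem_powersetCard.2 ⟨?_, he2.2⟩
      intro x hx
      simp only [Finset.mem_insert, Finset.mem_singleton] at hx
      rw [Finset.mem_range]
      omega
    by_cases hai : a < i
    · apply Finset.mem_union_right
      refine Finset.mem_image.2 ⟨(a, b), ?_, rfl⟩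
      simp only [Finset.mem_product, Finset.mem_sdiff, Finset.mem_range]
      exact ⟨hai, hbn, hbr⟩
    exfalso
    apply hiA
    have h1 : ({i, b} : Finset ℕ) ∈ A := by
      rcases Nat.lt_or_ge i a with h | h
      · exact step i a b h (by omega) (by omega) he
      · rwa [show i = a by omega]
    rcases Nat.lt_or_ge r b with h | h
    · rw [Finset.pair_comm] at h1 ⊢
      exact step r b i h (by omega) (by omega) h1
    · rwa [show r = b by omega]
  refine (Finset.card_le_card hsub).trans ((Finset.card_union_le _ _).trans ?_)
  apply Nat.add_le_add
  · simp
  · refine Finset.card_image_le.trans ?_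
    rw [Finset.card_product, Finset.card_sdiff_of_subset (by
      intro x hx
      rw [Finset.mem_range] at *
      omega)]
    simp

/-- Erdős–Gallai matching theorem. -/
lemma erdos_gallai_s8 (n s : ℕ) (hn : 2 * s ≤ n) (A : Finset (Finset ℕ))
    (hA : A ⊆ (range n).powersetCard 2) (hM : ¬ HasMatch A s) :
    A.card ≤ max ((2 * s - 1).choose 2) (n.choose 2 - (n - s + 1).choose 2) := by
  obtain ⟨B, h1, h2, h3, h4⟩ := exists_shifted_s8 n s _ A rfl hA hM
  rw [← h1]
  exact shifted_bound n s hn B h2 h3 h4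

/-- In a `d`-disjunct matrix with no isolated columns, a column `c` of weight
`d + s` with `1 ≤ s ≤ d − 1` has at most
`max (C(2s−1, 2)) (C(d+s, 2) − C(d+1, 2))` non-private 2-subsets. -/
theorem nonprivate_pairs_card_bound
    (d s t n : ℕ) (hd : 1 ≤ d) (hs1 : 1 ≤ s) (hs2 : s ≤ d - 1)
    (col : Fin n → Finset (Fin t))
    (hdis : Disjunct d col)
    (hiso : ∀ j, ¬ IsolatedCol col j)
    (c : Fin n) (hc : (col c).card = d + s) :
    (((col c).powersetCard 2).filter (fun e => ∃ j', j' ≠ c ∧ e ⊆ col j')).card ≤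
      max (Nat.choose (2 * s - 1) 2) (Nat.choose (d + s) 2 - Nat.choose (d + 1) 2) := by
  have hpsi : ∃ ψ : ℕ → Fin t, (∀ k < d + s, ψ k ∈ col c) ∧ ∀ x ∈ col c, ∃ k < d + s, ψ k = x := by
    have hne : (col c).Nonempty := by
      rw [← Finset.card_pos]; omega
    obtain ⟨x0, -⟩ := hne
    let E := (col c).equivFinOfCardEq hc
    refine ⟨fun k => if h : k < d + s then (E.symm ⟨k, h⟩ : Fin t) else x0, ?_, ?_⟩
    · intro k hk
      simp [hk]
    · intro x hx
      refine ⟨E ⟨x, hx⟩, (E ⟨x, hx⟩).2, ?_⟩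
      simp
  obtain ⟨ψ, hψ1, hψ2⟩ := hpsi
  set N := ((col c).powersetCard 2).filter (fun e => ∃ j', j' ≠ c ∧ e ⊆ col j') with hN
  set A := ((range (d + s)).powersetCard 2).filter (fun e => e.image ψ ∈ N) with hAdef
  have hNA : N.card ≤ A.card := by
    have : N ⊆ A.image (fun e => e.image ψ) := by
      intro e he
      have h2 := Finset.mem_powersetCard.1 (Finset.mem_filter.1 he).1
      obtain ⟨x, y, hxy, rfl⟩ := Finset.card_eq_two.1 h2.2
      obtain ⟨k, hk, rfl⟩ := hψ2 x (h2.1 (by simp))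
      obtain ⟨l, hl, rfl⟩ := hψ2 y (h2.1 (by simp))
      have hkl : k ≠ l := fun h => hxy (by rw [h])
      have him : ({k, l} : Finset ℕ).image ψ = {ψ k, ψ l} := by
        simp [Finset.image_insert]
      refine Finset.mem_image.2 ⟨{k, l}, Finset.mem_filter.2 ⟨?_, ?_⟩, him⟩
      · refine Finset.mem_powersetCard.2 ⟨?_, Finset.card_pair hkl⟩
        intro z hz
        simp only [Finset.mem_insert, Finset.mem_singleton] at hz
        rw [Finset.mem_range]
        omega
      · rw [him]; exact he
    exact (Finset.card_le_card this).trans Finset.card_image_le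
  refine hNA.trans ?_
  have hgoal := erdos_gallai_s8 (d + s) s (by omega) A (Finset.filter_subset _ _) ?_
  · rwa [Nat.add_sub_cancel] at hgoal
  rintro ⟨P, hP, hPc, hPd⟩
  have h1 : ∀ e : Finset ℕ, ∃ j, e ∈ P → j ≠ c ∧ e.image ψ ⊆ col j := by
    intro e
    by_cases he : e ∈ P
    · obtain ⟨j, hj⟩ := (Finset.mem_filter.1 (Finset.mem_filter.1 (hP he)).2).2
      exact ⟨j, fun _ => hj⟩
    · exact ⟨c, fun h => absurd h he⟩
  choose J hJ using h1
  have h2 : ∀ k : ℕ, ∃ j, k < d + s → j ≠ c ∧ ψ k ∈ col j := by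
    intro k
    by_cases hk : k < d + s
    · have := hiso c
      unfold IsolatedCol at this
      push Not at this
      obtain ⟨j, hj, hjc⟩ := this (ψ k) (hψ1 k hk)
      exact ⟨j, fun _ => ⟨hjc, hj⟩⟩
    · exact ⟨c, fun h => absurd h hk⟩
  choose K hK using h2
  have hU : (P.biUnion id).card = 2 * s := by
    rw [Finset.card_biUnion (t := id) (fun a ha b hb hab => hPd a ha b hb hab)]
    simp only [id]
    rw [
      Finset.sum_congr rfl (fun e he =>
        (Finset.mem_powersetCard.1 (Finset.mem_filter.1 (hP he)).1).2)]
    simp [hPc, mul_comm]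
  have hUs : P.biUnion id ⊆ range (d + s) := by
    intro x hx
    obtain ⟨e, he, hx⟩ := Finset.mem_biUnion.1 hx
    exact (Finset.mem_powersetCard.1 (Finset.mem_filter.1 (hP he)).1).1 hx
  refine hdis c (P.image J ∪ (range (d + s) \ P.biUnion id).image K) ?_ ?_ ?_
  · intro h
    rcases Finset.mem_union.1 h with h | h
    · obtain ⟨e, he, hec⟩ := Finset.mem_image.1 h
      exact (hJ e he).1 hec
    · obtain ⟨k, hk, hkc⟩ := Finset.mem_image.1 h
      exact (hK k (Finset.mem_range.1 (Finset.mem_sdiff.1 hk).1)).1 hkc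
  · have a1 : (P.image J).card ≤ s := Finset.card_image_le.trans hPc.le
    have a2 : ((range (d + s) \ P.biUnion id).image K).card ≤ d - s := by
      refine Finset.card_image_le.trans ?_
      rw [Finset.card_sdiff_of_subset hUs, hU, Finset.card_range]
      omega
    have := Finset.card_union_le (P.image J) ((range (d + s) \ P.biUnion id).image K)
    omega
  · intro x hx
    obtain ⟨k, hk, rfl⟩ := hψ2 x hx
    by_cases hkU : k ∈ P.biUnion id
    · obtain ⟨e, he, hke⟩ := Finset.mem_biUnion.1 hkU
      exact Finset.mem_biUnion.2 ⟨J e, Finset.mem_union_left _ (Finset.mem_image_of_mem _ he),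
        (hJ e he).2 (Finset.mem_image_of_mem _ hke)⟩
    · exact Finset.mem_biUnion.2 ⟨K k, Finset.mem_union_right _ (Finset.mem_image_of_mem _
        (Finset.mem_sdiff.2 ⟨Finset.mem_range.2 hk, hkU⟩)), (hK k hk).2⟩
end

section
/- Let d ≥ 1 and let M be a t×n binary matrix that is d-disjunct, and let c be a column of M with weight w_c. Then the matrix obtained from M by deleting column c and all rows belonging to c is a (t−w_c)×(n−1) binary matrix that is (d−1)-disjunct. -/
open Finset

/-- Deleting a column `c` of weight `w` from a `t × n` `d`-disjunct matrix,
together with all rows belonging to `c`, yields a `(t − w) × (n − 1)` matrix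
that is `(d − 1)`-disjunct. -/
theorem delete_column_disjunct
    (d t n : ℕ) (hd : 1 ≤ d)
    (col : Fin n → Finset (Fin t))
    (hdis : Disjunct d col)
    (c : Fin n) (w : ℕ) (hw : (col c).card = w) :
    Disjunct (d - 1)
        (fun j : {j : Fin n // j ≠ c} => Finset.subtype (fun i => i ∉ col c) (col j.1)) ∧
      Fintype.card {i : Fin t // i ∉ col c} = t - w ∧
      Fintype.card {j : Fin n // j ≠ c} = n - 1 := by
  refine ⟨?_, ?_, ?_⟩
  · intro j S hj hS hsub
    refine hdis j.1 (insert c (S.map (Function.Embedding.subtype _))) ?_ ?_ ?_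
    · simp only [Finset.mem_insert, Finset.mem_map, not_or]
      refine ⟨j.2, ?_⟩
      rintro ⟨x, hx, hxj⟩
      have : x = j := Subtype.ext hxj
      exact hj (this ▸ hx)
    · refine (Finset.card_insert_le _ _).trans ?_
      rw [Finset.card_map]
      omega
    · intro i hi
      rw [Finset.mem_biUnion]
      by_cases hc : i ∈ col c
      · exact ⟨c, Finset.mem_insert_self _ _, hc⟩
      · have h1 := @hsub ⟨i, hc⟩ (by simpa using hi)
        rw [Finset.mem_biUnion] at h1
        obtain ⟨k, hk, hik⟩ := h1
        refine ⟨k.1, Finset.mem_insert_of_mem (Finset.mem_map.2 ⟨k, hk, rfl⟩), ?_⟩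
        simpa using hik
  · subst hw
    rw [Fintype.card_subtype_compl]
    simp
  · rw [Fintype.card_subtype_compl]
    simp
end

section
/- Let d ≥ 1, let M be a t×n binary matrix that is d-disjunct and has no isolated columns, and let c be a column of M with weight |c| = d+s where 1 ≤ s ≤ d−1 and d+s ≤ (5d+2)/3. Then the number of private 2-subsets of c satisfies |P(c)| ≥ C(d+1, 2), where C(a,b) denotes the binomial coefficient. -/
open Finset

/-- `M` encodes a matching of the relation `R` as an involution. -/
def IsMat {V : Type*} (R : V → V → Prop) (M : Equiv.Perm V) : Prop :=
  (∀ x, M (M x) = x) ∧ ∀ x, M x ≠ x → R x (M x)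

/-- Augmenting a matching by an edge between two missed vertices. -/
lemma IsMat.augment {V : Type*} [Fintype V] [DecidableEq V] {R : V → V → Prop}
    (hs : ∀ x y, R x y → R y x) {M : Equiv.Perm V} (hM : IsMat R M) {x y : V} (hxy : x ≠ y)
    (hR : R x y) (hx : M x = x) (hy : M y = y) :
    ∃ M', IsMat R M' ∧ M'.support.card = M.support.card + 2 := by
  have hdisj : Equiv.Perm.Disjoint (Equiv.swap x y) M := by
    intro z
    by_cases h1 : z = x
    · right; rw [h1, hx]
    by_cases h2 : z = y
    · right; rw [h2, hy]
    left; exact Equiv.swap_apply_of_ne_of_ne h1 h2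
  refine ⟨Equiv.swap x y * M, ⟨?_, ?_⟩, ?_⟩
  · intro z
    have hc := hdisj.commute.eq
    have : (Equiv.swap x y * M) * (Equiv.swap x y * M) = 1 := by
      calc (Equiv.swap x y * M) * (Equiv.swap x y * M)
          = Equiv.swap x y * (M * Equiv.swap x y) * M := by group
        _ = (Equiv.swap x y * Equiv.swap x y) * (M * M) := by rw [← hc]; group
        _ = 1 := by
          rw [Equiv.swap_mul_self, one_mul]
          ext z; simpa using hM.1 z
    have h2 := congrArg (fun p : Equiv.Perm V => p z) this
    simpa using h2
  · intro z hz
    by_cases h1 : z = x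
    · subst h1; simp [hx, hR]
    by_cases h2 : z = y
    · subst h2; simpa [hy] using hs _ _ hR
    have h3 : M z ≠ x := fun h => h1 (by rw [← hM.1 z, h, hx])
    have h4 : M z ≠ y := fun h => h2 (by rw [← hM.1 z, h, hy])
    have h5 : (Equiv.swap x y * M) z = M z := by
      simp [Equiv.swap_apply_of_ne_of_ne h3 h4]
    rw [h5] at hz ⊢
    exact hM.2 z hz
  · rw [hdisj.card_support_mul, Equiv.Perm.card_support_swap hxy]; omega

/-- Switching two matchings on a set closed under both. -/
lemma IsMat.switch {V : Type*} [Fintype V] [DecidableEq V] {R : V → V → Prop}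
    {M N : Equiv.Perm V} (hM : IsMat R M) (hN : IsMat R N) (C : Finset V)
    (hCM : ∀ x, x ∈ C → M x ∈ C) (hCN : ∀ x, x ∈ C → N x ∈ C) :
    ∃ M', IsMat R M' ∧ (∀ x ∈ C, M' x = N x) ∧ (∀ x, x ∉ C → M' x = M x) ∧
      M'.support.card = (N.support.filter (· ∈ C)).card + (M.support.filter (· ∉ C)).card := by
  have hCM' : ∀ x, x ∉ C → M x ∉ C := fun x hx h => hx (by rw [← hM.1 x]; exact hCM _ h)
  have hinv : Function.Involutive (fun x : V => if x ∈ C then (N x : V) else (M x : V)) := by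
    intro x
    by_cases hx : x ∈ C
    · simp [hx, hCN x hx, hN.1]
    · simp [hx, hCM' x hx, hM.1]
  have e1 : ∀ x ∈ C, (Function.Involutive.toPerm _ hinv) x = N x := by intro x hx; simp [hx]
  have e2 : ∀ x, x ∉ C → (Function.Involutive.toPerm _ hinv) x = M x := by intro x hx; simp [hx]
  refine ⟨(Function.Involutive.toPerm _ hinv), ⟨fun x => hinv x, ?_⟩, e1, e2, ?_⟩
  · intro x hx
    by_cases h : x ∈ C
    · rw [e1 x h] at hx ⊢; exact hN.2 x hx
    · rw [e2 x h] at hx ⊢; exact hM.2 x hx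
  · rw [← Finset.card_filter_add_card_filter_not (s := (Function.Involutive.toPerm _ hinv).support) (· ∈ C)]
    congr 2
    · ext x
      simp only [mem_filter, Equiv.Perm.mem_support]
      constructor
      · rintro ⟨h1, h2⟩; rw [e1 x h2] at h1; exact ⟨h1, h2⟩
      · rintro ⟨h1, h2⟩; rw [e1 x h2]; exact ⟨h1, h2⟩
    · ext x
      simp only [mem_filter, Equiv.Perm.mem_support]
      constructor
      · rintro ⟨h1, h2⟩; rw [e2 x h2] at h1; exact ⟨h1, h2⟩
      · rintro ⟨h1, h2⟩; rw [e2 x h2]; exact ⟨h1, h2⟩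

/-- Gallai's lemma at distance two. -/
lemma gallai_two {V : Type*} [Fintype V] [DecidableEq V] {R : V → V → Prop}
    (hs : ∀ x y, R x y → R y x) (hirr : ∀ x, ¬ R x x) {K : ℕ}
    (hmax : ∀ M, IsMat R M → M.support.card ≤ K)
    {M N : Equiv.Perm V} (hM : IsMat R M) (hN : IsMat R N)
    (hMK : M.support.card = K) (hNK : N.support.card = K)
    {u v w : V} (hu : M u = u) (hw : M w = w) (hv : N v = v)
    (huv : R u v) (hwv : R w v) : u = w := by
  classical
  by_contra huw
  set p : Equiv.Perm V := N * M with hp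
  have hMi : M⁻¹ = M := by
    ext x; rw [Equiv.Perm.inv_eq_iff_eq]; exact (hM.1 x).symm
  have hNi : N⁻¹ = N := by
    ext x; rw [Equiv.Perm.inv_eq_iff_eq]; exact (hN.1 x).symm
  have hNM : N * M = p := rfl
  have hMN : M * N = p⁻¹ := by rw [hp, mul_inv_rev, hMi, hNi]
  have hMM : M * M = 1 := by ext x; simpa using hM.1 x
  have hNN : N * N = 1 := by ext x; simpa using hN.1 x
  have hconj : M * p * M⁻¹ = p⁻¹ := by
    rw [hMi, ← hMN, hp]
    calc M * (N * M) * M = M * N * (M * M) := by group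
      _ = M * N := by rw [hMM, mul_one]
  have hMp : ∀ i : ℤ, M * p ^ i = p ^ (-i) * M := by
    intro i
    have h : (M * p * M⁻¹) ^ i = M * p ^ i * M⁻¹ := conj_zpow
    rw [hconj, inv_zpow'] at h
    rw [h]; group
  have hMv : ∀ i : ℤ, M ((p ^ i) v) = (p ^ (-i - 1)) v := by
    intro i
    have h1 : M v = p⁻¹ v := by rw [← hMN]; simp [hv]
    calc M ((p ^ i) v) = (M * p ^ i) v := rfl
      _ = (p ^ (-i)) (M v) := by rw [hMp]; rfl
      _ = (p ^ (-i) * p⁻¹) v := by rw [h1]; rfl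
      _ = (p ^ (-i - 1)) v := by rw [zpow_sub_one]
  have hNv : ∀ i : ℤ, N ((p ^ i) v) = (p ^ (-i)) v := by
    intro i
    have h1 : N = p * M := by rw [hp, mul_assoc, hMM, mul_one]
    calc N ((p ^ i) v) = p (M ((p ^ i) v)) := by
          rw [show N ((p ^ i) v) = (p * M) ((p ^ i) v) from by rw [← h1]]; rfl
      _ = (p * p ^ (-i - 1)) v := by rw [hMv]; rfl
      _ = (p ^ (-i)) v := by rw [← zpow_one_add]; congr 2; ring
  let C : Finset V := univ.filter (fun x => ∃ i : ℤ, (p ^ i) v = x)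
  have hCmem : ∀ x, x ∈ C ↔ ∃ i : ℤ, (p ^ i) v = x := by intro x; simp [C]
  have hCM : ∀ x, x ∈ C → M x ∈ C := by
    intro x hx
    obtain ⟨i, rfl⟩ := (hCmem x).1 hx
    exact (hCmem _).2 ⟨-i - 1, (hMv i).symm⟩
  have hCN : ∀ x, x ∈ C → N x ∈ C := by
    intro x hx
    obtain ⟨i, rfl⟩ := (hCmem x).1 hx
    exact (hCmem _).2 ⟨-i, (hNv i).symm⟩
  have hvC : v ∈ C := (hCmem v).2 ⟨0, by simp⟩
  have hnot : ¬ (u ∈ C ∧ w ∈ C) := by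
    rintro ⟨h1, h2⟩
    obtain ⟨i, rfl⟩ := (hCmem _).1 h1
    obtain ⟨j, rfl⟩ := (hCmem _).1 h2
    have key : ∀ a b : ℤ, (p ^ a) v = (p ^ b) v → p ^ (a - b) ∈ MulAction.stabilizer (Equiv.Perm V) v := by
      intro a b h
      rw [MulAction.mem_stabilizer_iff, Equiv.Perm.smul_def, sub_eq_neg_add, zpow_add,
        Equiv.Perm.mul_apply, h, ← Equiv.Perm.mul_apply, ← zpow_add]
      simp
    rw [hMv] at hu hw
    have k1 := key _ _ hu
    have k2 := key _ _ hw
    have k3 : p ^ (i - j) ∈ MulAction.stabilizer (Equiv.Perm V) v := by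
      have e : p ^ (i - j) = (p ^ (-i - 1 - i)) ^ (-(i - j) + i) * (p ^ (-j - 1 - j)) ^ (-i) := by
        rw [← zpow_mul, ← zpow_mul, ← zpow_add]; congr 1; ring
      rw [e]
      exact mul_mem (zpow_mem k1 _) (zpow_mem k2 _)
    apply huw
    rw [MulAction.mem_stabilizer_iff, Equiv.Perm.smul_def] at k3
    have : i = j + (i - j) := by ring
    rw [this, zpow_add, Equiv.Perm.mul_apply, k3]
  obtain ⟨M', hM', hM'C, hM'n, hM'c⟩ := hM.switch hN C hCM hCN
  obtain ⟨N', hN', -, -, hN'c⟩ := hN.switch hM C hCN hCM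
  have hsum : M'.support.card = K := by
    have a1 := Finset.card_filter_add_card_filter_not (s := M.support) (· ∈ C)
    have a2 := Finset.card_filter_add_card_filter_not (s := N.support) (· ∈ C)
    have := hmax _ hM'
    have := hmax _ hN'
    omega
  have hfin : ∀ z, z ∉ C → M z = z → R z v → False := by
    intro z hz hMz hR
    have hne : z ≠ v := by rintro rfl; exact hirr _ hR
    obtain ⟨M'', h1, h2⟩ := hM'.augment hs hne hR (by rw [hM'n z hz, hMz])
      (by rw [hM'C v hvC, hv])
    have := hmax _ h1
    omega
  by_cases huC : u ∈ C
  · exact hfin w (fun h => hnot ⟨huC, h⟩) hw hwv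
  · exact hfin u huC hu huv

open Classical in
/-- The counting half of the factor-critical case. -/
lemma count_crit {V : Type*} [Fintype V] {R : V → V → Prop} (hs : ∀ x y, R x y → R y x)
    (hirr : ∀ x, ¬ R x x) (S : Finset V) (hS : ∀ x y, R x y → x ∈ S ∨ y ∈ S)
    (h1 : ∀ v u w, u ∉ S → w ∉ S → R u v → R w v → u = w) :
    (univ.filter (fun q : V × V => R q.1 q.2)).card ≤ S.card * (S.card + 1) := by
  let f : V × V → V × Option V := fun q => 
    if q.1 ∈ S then (q.1, if q.2 ∈ S then some q.2 else some q.1) else (q.2, none)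
  have hT : (S ×ˢ (insert none (S.image some))).card = S.card * (S.card + 1) := by
    rw [card_product, card_insert_of_notMem (by simp),
      card_image_of_injective _ (Option.some_injective _)]
  rw [← hT]
  apply Finset.card_le_card_of_injOn f
  · rintro ⟨x, y⟩ hq
    have hR : R x y := by simpa using hq
    have := hS x y hR
    simp only [f, coe_product, Set.mem_prod, mem_coe]
    by_cases hx : x ∈ S <;> by_cases hy : y ∈ S <;> simp_all
  · rintro ⟨x, y⟩ hq ⟨x', y'⟩ hq' h
    have hR : R x y := by simpa using hq
    have hR' : R x' y' := by simpa using hq'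
    have a := hs _ _ hR
    have a' := hs _ _ hR'
    have b := hS x y hR
    have b' := hS x' y' hR'
    have i1 := hirr x
    have i2 := hirr x'
    simp only [f] at h
    by_cases hx : x ∈ S <;> by_cases hy : y ∈ S <;> by_cases hx' : x' ∈ S <;>
      by_cases hy' : y' ∈ S <;> simp [hx, hy, hx', hy'] at h <;> grind

open Classical in
/-- The Erdős–Gallai matching theorem in the range where the star-like bound dominates. -/
lemma erdos_gallai_s10 {V : Type*} [Fintype V] [DecidableEq V] (k : ℕ) : ∀ (R : V → V → Prop) (A : Finset V)
    (_ : ∀ x y, R x y → R y x) (_ : ∀ x, ¬ R x x) (_ : ∀ x y, R x y → x ∈ A)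
    (_ : ∀ M, IsMat R M → M.support.card ≤ 2 * k) (_ : 5 * k + 3 ≤ 2 * A.card),
    (univ.filter (fun q : V × V => R q.1 q.2)).card + k * (k + 1) ≤ 2 * k * A.card := by
  induction k with
  | zero =>
    intro R A hs hirr hA hm hk
    have : (univ.filter (fun q : V × V => R q.1 q.2)) = ∅ := by
      rw [filter_eq_empty_iff]
      rintro ⟨x, y⟩ - hR
      have h1 : IsMat R (1 : Equiv.Perm V) := ⟨by simp, by simp⟩
      have hne : x ≠ y := by rintro rfl; exact hirr _ hR
      obtain ⟨M', h2, h3⟩ := h1.augment hs hne hR rfl rfl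
      have := hm _ h2
      omega
    simp [this]
  | succ k ih =>
    intro R A hs hirr hA hm hk
    by_cases hv : ∃ v ∈ A, ∀ M, IsMat R M → M v = v → M.support.card ≤ 2 * k
    · obtain ⟨v, hvA, hv⟩ := hv
      obtain ⟨R', hR'⟩ : ∃ R' : V → V → Prop, ∀ x y, R' x y ↔ (R x y ∧ x ≠ v ∧ y ≠ v) :=
        ⟨_, fun _ _ => Iff.rfl⟩
      have := ih R' (A.erase v)
        (fun x y h => (hR' _ _).2 ⟨hs _ _ ((hR' _ _).1 h).1, ((hR' _ _).1 h).2.2,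
          ((hR' _ _).1 h).2.1⟩) (fun x h => hirr x ((hR' _ _).1 h).1)
        (fun x y h => mem_erase.2 ⟨((hR' _ _).1 h).2.1, hA _ _ ((hR' _ _).1 h).1⟩)
        (by
          intro M hM
          apply hv M ⟨hM.1, fun x hx => ((hR' _ _).1 (hM.2 x hx)).1⟩
          by_contra hne
          exact ((hR' _ _).1 (hM.2 v hne)).2.1 rfl)
        (by rw [card_erase_of_mem hvA]; omega)
      have hcard := card_erase_add_one hvA
      have hsub : (univ.filter (fun q : V × V => R q.1 q.2)) ⊆
          (univ.filter (fun q : V × V => R' q.1 q.2)) ∪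
          ((A.erase v).image (fun x => (v, x)) ∪ (A.erase v).image (fun x => (x, v))) := by
        rintro ⟨x, y⟩ hq
        have hR : R x y := by simpa using hq
        have h1 := hA _ _ hR
        have h2 := hA _ _ (hs _ _ hR)
        have hne : x ≠ y := by rintro rfl; exact hirr _ hR
        simp only [mem_union, mem_filter, mem_univ, true_and, mem_image, mem_erase, Prod.mk.injEq]
        by_cases hx : x = v
        · right; left; exact ⟨y, ⟨fun h => hne (hx.trans h.symm), h2⟩, hx.symm, rfl⟩
        by_cases hy : y = v
        · right; right; exact ⟨x, ⟨hx, h1⟩, rfl, hy.symm⟩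
        left; exact (hR' _ _).2 ⟨hR, hx, hy⟩
      have c1 := card_le_card hsub
      have c2 := card_union_le (univ.filter (fun q : V × V => R' q.1 q.2))
        ((A.erase v).image (fun x => (v, x)) ∪ (A.erase v).image (fun x => (x, v)))
      have c3 := card_union_le ((A.erase v).image (fun x => (v, x)))
        ((A.erase v).image (fun x => (x, v)))
      have c4 : ((A.erase v).image (fun x => (v, x))).card ≤ _ := card_image_le
      have c5 : ((A.erase v).image (fun x => (x, v))).card ≤ _ := card_image_le
      rw [← hcard]
      nlinarith
    · push Not at hv
      have hA0 : A.Nonempty := by rw [← card_pos]; omega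
      have hev : ∀ v ∈ A, ∃ M, IsMat R M ∧ M v = v ∧ M.support.card = 2 * (k + 1) := by
        intro v hvA
        obtain ⟨M, h1, h2, h3⟩ := hv v hvA
        refine ⟨M, h1, h2, ?_⟩
        have h4 : 2 ∣ M.support.card := by
          apply Equiv.Perm.two_dvd_card_support
          ext x; simpa [sq] using h1.1 x
        have := hm _ h1
        omega
      obtain ⟨a, ha⟩ := hA0
      obtain ⟨M, hM, -, hMc⟩ := hev a ha
      have := count_crit hs hirr M.support
        (by
          intro x y hR
          by_contra hcon
          push Not at hcon
          rw [Equiv.Perm.notMem_support, Equiv.Perm.notMem_support] at hcon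
          have hne : x ≠ y := by rintro rfl; exact hirr _ hR
          obtain ⟨M', h2, h3⟩ := hM.augment hs hne hR hcon.1 hcon.2
          have := hm _ h2
          omega)
        (by
          intro v u w hu hw huv hwv
          rw [Equiv.Perm.notMem_support] at hu hw
          obtain ⟨N, hN, hNv, hNc⟩ := hev v (hA _ _ (hs _ _ huv))
          exact gallai_two hs hirr hm hM hN hMc hNc hu hw hNv huv hwv)
      rw [hMc] at this
      nlinarith

/-- In a `d`-disjunct matrix with no isolated columns, a column `c` of weight
`d + s` with `1 ≤ s ≤ d − 1` and `d + s ≤ (5d + 2)/3` has at least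
`C(d+1, 2)` private 2-subsets. -/
theorem private_pairs_lower_bound
    (d s t n : ℕ) (hd : 1 ≤ d) (hs1 : 1 ≤ s) (hs2 : s ≤ d - 1)
    (col : Fin n → Finset (Fin t))
    (hdis : Disjunct d col)
    (hiso : ∀ j, ¬ IsolatedCol col j)
    (c : Fin n) (hc : (col c).card = d + s)
    (hsmall : ((d : ℝ) + s) ≤ (5 * (d : ℝ) + 2) / 3) :
    Nat.choose (d + 1) 2 ≤
      (((col c).powersetCard 2).filter (fun e => ∀ j', j' ≠ c → ¬ e ⊆ col j')).card := by
  classical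
  have hsm : 3 * s ≤ 2 * d + 2 := by
    have : (3 * s : ℝ) ≤ 2 * d + 2 := by linarith
    exact_mod_cast this
  obtain ⟨k, rfl⟩ : ∃ k, s = k + 1 := ⟨s - 1, by omega⟩
  let R : Fin t → Fin t → Prop := fun x y =>
    x ∈ col c ∧ y ∈ col c ∧ x ≠ y ∧ ∃ j, j ≠ c ∧ x ∈ col j ∧ y ∈ col j
  have hmat : ∀ M, IsMat R M → M.support.card ≤ 2 * k := by
    intro M hM
    by_contra hlt
    push Not at hlt
    have hMX : ∀ x ∈ col c, M x ∈ col c := by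
      intro x hx
      by_cases h : M x = x
      · rwa [h]
      · exact (hM.2 x h).2.1
    have hex : ∀ x, ∃ j, x ∈ col c → (j ≠ c ∧ x ∈ col j ∧ M x ∈ col j) := by
      intro x
      by_cases hx : x ∈ col c
      · by_cases h : M x = x
        · have := hiso c
          simp only [IsolatedCol] at this
          push Not at this
          obtain ⟨j, h1, h2⟩ := this x hx
          exact ⟨j, fun _ => ⟨h2, h1, by rwa [h]⟩⟩
        · obtain ⟨j, hj⟩ := (hM.2 x h).2.2.2
          exact ⟨j, fun _ => hj⟩
      · exact ⟨c, fun h => absurd h hx⟩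
    choose g hg using hex
    have hsub : M.support ⊆ col c := fun x hx => (hM.2 x (Equiv.Perm.mem_support.1 hx)).1
    have hsplit : M.support = ((col c).filter (fun x => M x < x)) ∪
        ((col c).filter (fun x => M x < x)).image M := by
      ext x
      simp only [Equiv.Perm.mem_support, mem_union, mem_filter, mem_image]
      constructor
      · intro hx
        have hxc := (hM.2 x hx).1
        rcases lt_or_gt_of_ne hx with h | h
        · left; exact ⟨hxc, h⟩
        · right; exact ⟨M x, ⟨hMX x hxc, by rw [hM.1]; exact h⟩, hM.1 x⟩
      · rintro (⟨_, h⟩ | ⟨y, ⟨_, h⟩, rfl⟩)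
        · exact h.ne
        · rw [hM.1]; exact h.ne'
    have c1 : M.support.card ≤ 2 * ((col c).filter (fun x => M x < x)).card := by
      rw [hsplit]
      have h1 := card_union_le ((col c).filter (fun x => M x < x))
        (((col c).filter (fun x => M x < x)).image M)
      have h2 : (((col c).filter (fun x => M x < x)).image M).card ≤ _ := card_image_le
      omega
    have c2 := Finset.card_filter_add_card_filter_not (s := col c) (fun x => M x < x)
    refine hdis c (((col c).filter (fun x => ¬ M x < x)).image g) ?_ ?_ ?_
    · intro h
      obtain ⟨x, hx, hxc⟩ := mem_image.1 h
      exact (hg x (mem_filter.1 hx).1).1 hxc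
    · have : (((col c).filter (fun x => ¬ M x < x)).image g).card ≤ _ := card_image_le
      omega
    · intro x hx
      rw [mem_biUnion]
      by_cases h : M x < x
      · refine ⟨g (M x), mem_image_of_mem _ (mem_filter.2 ⟨hMX x hx, ?_⟩), ?_⟩
        · rw [hM.1]; exact not_lt.2 h.le
        · have := (hg (M x) (hMX x hx)).2.2
          rwa [hM.1] at this
      · exact ⟨g x, mem_image_of_mem _ (mem_filter.2 ⟨hx, h⟩), (hg x hx).2.1⟩
  have hEG : (univ.filter (fun q : Fin t × Fin t => R q.1 q.2)).card + k * (k + 1) ≤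
      2 * k * (col c).card := by
   convert erdos_gallai_s10 k R (col c)
    (fun x y ⟨h1, h2, h3, j, h4, h5, h6⟩ => ⟨h2, h1, h3.symm, j, h4, h6, h5⟩)
    (fun x h => h.2.2.1 rfl) (fun x y h => h.1) hmat (by omega)
  set P := ((col c).powersetCard 2).filter (fun e => ∀ j', j' ≠ c → ¬ e ⊆ col j') with hP
  have hsplit : ((col c).offDiag.filter (fun q : Fin t × Fin t => R q.1 q.2)).card +
      ((col c).offDiag.filter (fun q : Fin t × Fin t => ¬ R q.1 q.2)).card =
      (col c).offDiag.card := by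
    convert Finset.card_filter_add_card_filter_not (s := (col c).offDiag)
      (fun q : Fin t × Fin t => R q.1 q.2)
  have hE1 : ((col c).offDiag.filter (fun q : Fin t × Fin t => R q.1 q.2)).card ≤
      (univ.filter (fun q : Fin t × Fin t => R q.1 q.2)).card :=
    card_le_card (filter_subset_filter _ (subset_univ _))
  have hE2 : ((col c).offDiag.filter (fun q : Fin t × Fin t => ¬ R q.1 q.2)).card ≤
      2 * P.card := by
    apply Finset.card_le_mul_card_image_of_maps_to (f := fun q : Fin t × Fin t => ({q.1, q.2} : Finset (Fin t)))
    · rintro ⟨x, y⟩ hq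
      rw [mem_filter, mem_offDiag] at hq
      obtain ⟨⟨h1, h2, h3⟩, h4⟩ := hq
      simp only at h1 h2 h3 h4
      rw [hP, mem_filter, mem_powersetCard]
      refine ⟨⟨?_, card_pair h3⟩, ?_⟩
      · intro z hz
        simp only [mem_insert, mem_singleton] at hz
        rcases hz with rfl | rfl <;> assumption
      · intro j hj hsub
        exact h4 ⟨h1, h2, h3, j, hj, hsub (by simp), hsub (by simp)⟩
    · intro e he
      rw [hP, mem_filter, mem_powersetCard] at he
      obtain ⟨a, b, hab, rfl⟩ := card_eq_two.1 he.1.2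
      calc _ ≤ ({(a, b), (b, a)} : Finset (Fin t × Fin t)).card := by
            apply card_le_card
            rintro ⟨x, y⟩ hq
            rw [mem_filter, mem_filter, mem_offDiag] at hq
            obtain ⟨⟨⟨-, -, h3⟩, -⟩, h5⟩ := hq
            simp only at h3 h5
            have hx : x ∈ ({a, b} : Finset (Fin t)) := by rw [← h5]; simp
            have hy : y ∈ ({a, b} : Finset (Fin t)) := by rw [← h5]; simp
            simp only [mem_insert, mem_singleton, Prod.mk.injEq] at hx hy ⊢
            grind
        _ ≤ 2 := card_le_two
  rw [offDiag_card, hc] at hsplit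
  rw [hc] at hEG
  have hch : Nat.choose (d + 1) 2 * 2 = (d + 1) * d := by
    have := Nat.triangle_succ d
    rw [Nat.choose_two_right]
    exact Nat.div_mul_cancel (Nat.even_mul_pred_self (d + 1)).two_dvd
  have hsq : (d + (k + 1)) * (d + (k + 1)) - (d + (k + 1)) + (d + (k + 1)) = (d + (k + 1)) * (d + (k + 1)) :=
    Nat.sub_add_cancel (Nat.le_mul_self _)
  nlinarith
end

section
/- Let d ≥ 1 and let M be a t×n binary matrix with n > t that is d-disjunct, such that every column of M has weight at most ⌊5d/3⌋. Then t > d² + d + 1. -/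
open Finset

/-- `HasM r s W`: the graph `r` has a matching with `s` edges inside `W`. -/
def HasM {α : Type*} [DecidableEq α] (r : α → α → Prop) : ℕ → Finset α → Prop
  | 0, _ => True
  | s + 1, W => ∃ a ∈ W, ∃ b ∈ W, a ≠ b ∧ r a b ∧ HasM r s (W \ {a, b})

section
variable {α : Type*} [DecidableEq α] {r : α → α → Prop}

lemma HasM.mono {s : ℕ} : ∀ {W W' : Finset α}, HasM r s W → W ⊆ W' → HasM r s W' := by
  induction s with
  | zero => intro W W' _ _; trivial
  | succ s ih =>
    rintro W W' ⟨a, ha, b, hb, hab, hr, h⟩ hs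
    exact ⟨a, hs ha, b, hs hb, hab, hr, ih h (Finset.sdiff_subset_sdiff hs (le_refl _))⟩

lemma HasM.add {s : ℕ} {W W' : Finset α} {a b : α} (h : HasM r s W) (ha : a ∈ W') (hb : b ∈ W')
    (hab : a ≠ b) (hr : r a b) (hs : W ⊆ W' \ {a, b}) : HasM r (s + 1) W' :=
  ⟨a, ha, b, hb, hab, hr, h.mono hs⟩

/-- A matching either misses `x` or has an edge at `x`. -/
lemma HasM.split (hsym : ∀ a b, r a b → r b a) (x : α) {s : ℕ} : ∀ {W : Finset α}, HasM r s W →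
    x ∈ W → HasM r s (W \ {x}) ∨
      ∃ s', s = s' + 1 ∧ ∃ y ∈ W, y ≠ x ∧ r x y ∧ HasM r s' (W \ {x, y}) := by
  induction s with
  | zero => intro W _ _; left; trivial
  | succ s ih =>
    rintro W ⟨a, ha, b, hb, hab, hr, h⟩ hx
    by_cases hxa : x = a
    · subst hxa
      exact Or.inr ⟨s, rfl, b, hb, hab.symm, hr, h⟩
    by_cases hxb : x = b
    · subst hxb
      refine Or.inr ⟨s, rfl, a, ha, hab, hsym _ _ hr, h.mono ?_⟩
      intro z; simp; tauto
    rcases ih h (by simp [hx, hxa, hxb]) with h1 | ⟨s', rfl, y, hy, hyx, hry, h1⟩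
    · left
      refine h1.add (a := a) (b := b) ?_ ?_ hab hr ?_
      · simp [ha, Ne.symm hxa]
      · simp [hb, Ne.symm hxb]
      · intro z; simp; tauto
    · right
      simp only [Finset.mem_sdiff, Finset.mem_insert, Finset.mem_singleton, not_or] at hy
      refine ⟨s' + 1, rfl, y, hy.1, hyx, hry, h1.add (a := a) (b := b) ?_ ?_ hab hr ?_⟩
      · simp [ha, Ne.symm hxa, Ne.symm hy.2.1]
      · simp [hb, Ne.symm hxb, Ne.symm hy.2.2]
      · intro z; simp; tauto

/-- Exchange lemma for maximum matchings. -/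
lemma HasM.exch (hsym : ∀ a b, r a b → r b a) {s : ℕ} : ∀ {W : Finset α} {u v x : α},
    ¬ HasM r (s + 1) W → u ∈ W → v ∈ W → x ∈ W → u ≠ v → x ≠ u → x ≠ v →
    HasM r s (W \ {u, v}) → HasM r s (W \ {x}) →
    HasM r s (W \ {x, u}) ∨ HasM r s (W \ {x, v}) := by
  induction s with
  | zero => intros; left; trivial
  | succ s ih =>
    intro W u v x hno hu hv hx huv hxu hxv h1 h2
    rcases h1.split hsym x (by simp [hx, hxu, hxv]) with h1 | ⟨s', hs', y, hy, hyx, hry, h1⟩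
    · left
      refine h1.mono ?_
      intro z; simp; tauto
    obtain rfl : s = s' := by omega
    simp only [Finset.mem_sdiff, Finset.mem_insert, Finset.mem_singleton, not_or] at hy
    obtain ⟨hy, hyu, hyv⟩ := hy
    rcases h2.split hsym y (by simp [hy, hyx]) with h2 | ⟨s', hs', z, hz, hzy, hrz, h2⟩
    · exact absurd (h2.add hx hy hyx.symm hry (by intro z; simp; tauto)) hno
    obtain rfl : s = s' := by omega
    simp only [Finset.mem_sdiff, Finset.mem_singleton] at hz
    obtain ⟨hz, hzx⟩ := hz
    by_cases hzu : z = u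
    · subst hzu
      right
      refine h1.add (a := y) (b := z) ?_ ?_ hzy.symm hrz ?_
      · simp [*]
      · simp [*]
      · intro z; simp; tauto
    by_cases hzv : z = v
    · subst hzv
      left
      refine h1.add (a := y) (b := z) ?_ ?_ hzy.symm hrz ?_
      · simp [*]
      · simp [*]
      · intro z; simp; tauto
    have := ih (W := W \ {x, y}) (u := u) (v := v) (x := z)
      (fun h => hno (h.add hx hy hyx.symm hry (le_refl _)))
      (by simp [*, Ne.symm hxu, Ne.symm hyu]) (by simp [*, Ne.symm hxv, Ne.symm hyv])
      (by simp [*]) huv hzu hzv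
      (h1.mono (by intro z; simp; tauto)) (h2.mono (by intro z; simp; tauto))
    rcases this with h | h
    · left
      refine h.add (a := y) (b := z) ?_ ?_ hzy.symm hrz ?_
      · simp [*]
      · simp [*]
      · intro z; simp; tauto
    · right
      refine h.add (a := y) (b := z) ?_ ?_ hzy.symm hrz ?_
      · simp [*]
      · simp [*]
      · intro z; simp; tauto

lemma HasM.support {s : ℕ} : ∀ {W : Finset α}, HasM r s W →
    ∃ U ⊆ W, U.card = 2 * s ∧ HasM r s U := by
  induction s with
  | zero => intro W _; exact ⟨∅, by simp, by simp, trivial⟩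
  | succ s ih =>
    rintro W ⟨a, ha, b, hb, hab, hr, h⟩
    obtain ⟨U, hU, hc, hm⟩ := ih h
    have haU : a ∉ U := fun h => by simpa using hU h
    have hbU : b ∉ U := fun h => by simpa using hU h
    refine ⟨insert a (insert b U), ?_, ?_, ?_⟩
    · intro z hz
      simp only [Finset.mem_insert] at hz
      rcases hz with rfl | rfl | hz
      · exact ha
      · exact hb
      · exact (Finset.mem_sdiff.1 (hU hz)).1
    · rw [Finset.card_insert_of_notMem (by simp [hab, haU]), Finset.card_insert_of_notMem hbU]
      omega
    · refine hm.add (a := a) (b := b) (by simp) (by simp) hab hr ?_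
      intro z hz
      have h1 : z ≠ a := fun h => haU (h ▸ hz)
      have h2 : z ≠ b := fun h => hbU (h ▸ hz)
      simp [hz, h1, h2]

open Classical in
/-- Ordered pairs of distinct nonadjacent vertices in `W`. -/
noncomputable def nonadj (r : α → α → Prop) (W : Finset α) : Finset (α × α) :=
  W.offDiag.filter (fun p => ¬ r p.1 p.2)

lemma mem_nonadj {W : Finset α} {p : α × α} :
    p ∈ nonadj r W ↔ p.1 ∈ W ∧ p.2 ∈ W ∧ p.1 ≠ p.2 ∧ ¬ r p.1 p.2 := by
  simp [nonadj, Finset.mem_offDiag, and_assoc]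

/-- Erdős–Gallai bound in the range needed. -/
lemma erdos_gallai_s12 (hsym : ∀ a b, r a b → r b a) (s : ℕ) : ∀ {W : Finset α},
    ¬ HasM r (s + 1) W → 5 * s + 3 ≤ 2 * W.card →
    (W.card - s) * (W.card - s - 1) ≤ (nonadj r W).card := by
  classical
  induction s with
  | zero =>
    intro W hno _
    have : nonadj r W = W.offDiag := by
      ext ⟨a, b⟩
      rw [mem_nonadj, Finset.mem_offDiag]
      constructor
      · rintro ⟨h1, h2, h3, _⟩; exact ⟨h1, h2, h3⟩
      · rintro ⟨h1, h2, h3⟩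
        exact ⟨h1, h2, h3, fun h => hno ⟨a, h1, b, h2, h3, h, trivial⟩⟩
    rw [this, Finset.offDiag_card, Nat.sub_zero, Nat.mul_sub, mul_one]
  | succ s ih =>
    intro W hno hW
    by_cases hv : ∃ v ∈ W, ¬ HasM r (s + 1) (W \ {v})
    · obtain ⟨v, hv, hn⟩ := hv
      have hc : (W \ {v}).card = W.card - 1 := by
        rw [Finset.sdiff_singleton_eq_erase, Finset.card_erase_of_mem hv]
      have := ih hn (by omega)
      rw [hc, show W.card - 1 - s = W.card - (s + 1) by omega] at this
      refine this.trans (Finset.card_le_card ?_)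
      intro p hp
      rw [mem_nonadj] at hp ⊢
      exact ⟨(Finset.mem_sdiff.1 hp.1).1, (Finset.mem_sdiff.1 hp.2.1).1, hp.2.2⟩
    push Not at hv
    obtain ⟨v0, hv0⟩ : W.Nonempty := Finset.card_pos.1 (by omega)
    obtain ⟨U, hUW, hUc, hU⟩ := ((hv v0 hv0).mono Finset.sdiff_subset).support
    have hdisj : ∀ {a}, a ∈ W \ U → a ∈ W ∧ a ∉ U := fun h => Finset.mem_sdiff.1 h
    have hOc : (W \ U).card = W.card - 2 * (s + 1) := by
      rw [Finset.card_sdiff_of_subset hUW, hUc]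
    have hUno : ∀ a b, a ∉ U → b ∉ U → U ⊆ W \ {a, b} := by
      intro a b ha hb z hz
      have h1 : z ≠ a := fun h => ha (h ▸ hz)
      have h2 : z ≠ b := fun h => hb (h ▸ hz)
      simp [hUW hz, h1, h2]
    -- the outside is independent
    have hind : (W \ U).offDiag ⊆ nonadj r W := by
      rintro ⟨a, b⟩ hp
      rw [Finset.mem_offDiag] at hp
      obtain ⟨ha, hb, hab⟩ := hp
      rw [mem_nonadj]
      refine ⟨(hdisj ha).1, (hdisj hb).1, hab, fun h => hno ?_⟩
      exact hU.add (hdisj ha).1 (hdisj hb).1 hab h (hUno _ _ (hdisj ha).2 (hdisj hb).2)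
    -- every vertex of U has at most one neighbour outside
    have hone : ∀ x ∈ U, ((W \ U).filter (fun u => r x u)).card ≤ 1 := by
      intro x hx
      rw [Finset.card_le_one]
      intro u hu v hv'
      rw [Finset.mem_filter] at hu hv'
      by_contra huv
      have hxu : x ≠ u := fun h => (hdisj hu.1).2 (h ▸ hx)
      have hxv : x ≠ v := fun h => (hdisj hv'.1).2 (h ▸ hx)
      have huW := (hdisj hu.1).1
      have hvW := (hdisj hv'.1).1
      rcases HasM.exch hsym hno huW hvW (hUW hx) huv hxu hxv
        (hU.mono (hUno _ _ (hdisj hu.1).2 (hdisj hv'.1).2)) (hv x (hUW hx)) with h | h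
      · exact hno (h.add (hUW hx) huW hxu hu.2 (le_refl _))
      · exact hno (h.add (hUW hx) hvW hxv hv'.2 (le_refl _))
    set m := (W \ U).card with hm
    let C := (U ×ˢ (W \ U)).filter (fun p => ¬ r p.1 p.2)
    have hC : 2 * (s + 1) * (m - 1) ≤ C.card := by
      have h1 : C.card = ∑ x ∈ U, ((W \ U).filter (fun u => ¬ r x u)).card := by
        simp only [C, Finset.card_filter, Finset.sum_product]
      rw [h1, ← hUc, ← smul_eq_mul]
      refine Finset.card_nsmul_le_sum _ _ _ ?_
      intro x hx
      have h2 := Finset.card_filter_add_card_filter_not (s := W \ U) (fun u => r x u)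
      have h3 := hone x hx
      omega
    have hCsub : C ⊆ nonadj r W := by
      rintro ⟨a, b⟩ hp
      simp only [C, Finset.mem_filter, Finset.mem_product] at hp
      rw [mem_nonadj]
      exact ⟨hUW hp.1.1, (hdisj hp.1.2).1, fun (h : a = b) => (hdisj hp.1.2).2 (h ▸ hp.1.1), hp.2⟩
    have hC'sub : C.image Prod.swap ⊆ nonadj r W := by
      intro p hp
      rw [Finset.mem_image] at hp
      obtain ⟨q, hq, rfl⟩ := hp
      have := mem_nonadj.1 (hCsub hq)
      rw [mem_nonadj]
      exact ⟨this.2.1, this.1, this.2.2.1.symm, fun h => this.2.2.2 (hsym _ _ h)⟩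
    have hC'c : (C.image Prod.swap).card = C.card :=
      Finset.card_image_of_injective _ Prod.swap_injective
    have hd1 : Disjoint C (C.image Prod.swap) := by
      rw [Finset.disjoint_left]
      intro p hp hp'
      rw [Finset.mem_image] at hp'
      obtain ⟨q, hq, rfl⟩ := hp'
      simp only [C, Finset.mem_filter, Finset.mem_product, Prod.fst_swap, Prod.snd_swap] at hp hq
      exact (hdisj hp.1.2).2 hq.1.1
    have hd2 : Disjoint (C ∪ C.image Prod.swap) (W \ U).offDiag := by
      rw [Finset.disjoint_left]
      intro p hp hp'
      rw [Finset.mem_offDiag] at hp'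
      rw [Finset.mem_union, Finset.mem_image] at hp
      rcases hp with hp | ⟨q, hq, rfl⟩
      · simp only [C, Finset.mem_filter, Finset.mem_product] at hp
        exact (hdisj hp'.1).2 hp.1.1
      · simp only [C, Finset.mem_filter, Finset.mem_product] at hq
        exact (hdisj hp'.2.1).2 hq.1.1
    have htot := Finset.card_le_card
      (Finset.union_subset (Finset.union_subset hCsub hC'sub) hind)
    rw [Finset.card_union_of_disjoint hd2, Finset.card_union_of_disjoint hd1, hC'c,
      Finset.offDiag_card, ← hm] at htot
    have e1 : W.card - (s + 1) = m + (s + 1) := by omega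
    obtain ⟨k, hk⟩ : ∃ k, m = k + 1 := ⟨m - 1, by omega⟩
    have hks : s + 2 ≤ 2 * k := by omega
    rw [e1]
    rw [hk] at hC htot ⊢
    have e2 : (k + 1) * (k + 1) - (k + 1) = (k + 1) * k := by
      rw [Nat.mul_succ, Nat.add_sub_cancel]
    rw [e2] at htot
    simp only [Nat.add_sub_cancel] at hC
    have e3 : k + 1 + (s + 1) - 1 = k + s + 1 := by omega
    rw [e3]
    nlinarith [Nat.mul_le_mul_left (s + 1) hks]

end

section
variable {ι ρ : Type*} [DecidableEq ι] [DecidableEq ρ]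

/-- Two rows are adjacent (w.r.t. column `c`) if another column of `J` contains both. -/
def AdjRel (J : Finset ι) (col : ι → Finset ρ) (c : ι) (a b : ρ) : Prop :=
  ∃ j ∈ J, j ≠ c ∧ a ∈ col j ∧ b ∈ col j

lemma cover (J : Finset ι) (col : ι → Finset ρ) (c : ι) (k : ℕ) : ∀ (W : Finset ρ),
    HasM (AdjRel J col c) k W → (∀ i ∈ W, ∃ j ∈ J, j ≠ c ∧ i ∈ col j) →
    ∃ S : Finset ι, c ∉ S ∧ S.card + k ≤ W.card ∧ W ⊆ S.biUnion col := by
  classical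
  induction k with
  | zero =>
    intro W _ h
    haveI : Nonempty ι := ⟨c⟩
    choose! f hf using h
    refine ⟨W.image f, ?_, by simpa using Finset.card_image_le, ?_⟩
    · intro hc
      rw [Finset.mem_image] at hc
      obtain ⟨i, hi, rfl⟩ := hc
      exact (hf i hi).2.1 rfl
    · intro i hi
      rw [Finset.mem_biUnion]
      exact ⟨f i, Finset.mem_image_of_mem _ hi, (hf i hi).2.2⟩
  | succ k ih =>
    rintro W ⟨a, ha, b, hb, hab, ⟨j, hj, hjc, haj, hbj⟩, h⟩ hW
    obtain ⟨S, hcS, hS, hWS⟩ := ih _ h (fun i hi => hW i (Finset.mem_sdiff.1 hi).1)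
    have hsub : ({a, b} : Finset ρ) ⊆ W := by
      intro z hz
      simp only [Finset.mem_insert, Finset.mem_singleton] at hz
      rcases hz with rfl | rfl <;> assumption
    have h2 : ({a, b} : Finset ρ).card = 2 := Finset.card_pair hab
    have h3 := Finset.card_le_card hsub
    rw [Finset.card_sdiff_of_subset hsub] at hS
    refine ⟨insert j S, ?_, ?_, ?_⟩
    · simp [hcS, Ne.symm hjc]
    · have := Finset.card_insert_le j S
      omega
    · intro z hz
      rw [Finset.mem_biUnion]
      by_cases hza : z = a
      · exact ⟨j, by simp, hza ▸ haj⟩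
      by_cases hzb : z = b
      · exact ⟨j, by simp, hzb ▸ hbj⟩
      obtain ⟨j', hj', hz'⟩ := Finset.mem_biUnion.1 (hWS (by simp [hz, hza, hzb] : z ∈ W \ {a, b}))
      exact ⟨j', by simp [hj'], hz'⟩

lemma main_count (d : ℕ) (hd : 1 ≤ d) (col : ι → Finset ρ) (hdis : Disjunct d col)
    (hw : ∀ j, (col j).card ≤ 5 * d / 3) (J : Finset ι) (R : Finset ρ)
    (hJR : R.card < J.card) (hsub : ∀ j ∈ J, col j ⊆ R)
    (hiso : ∀ c ∈ J, ∀ i ∈ col c, ∃ j ∈ J, j ≠ c ∧ i ∈ col j) :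
    R.card > d ^ 2 + d + 1 := by
  classical
  have hcol : ∀ c ∈ J, (d + 1) * d ≤ (nonadj (AdjRel J col c) (col c)).card := by
    intro c hc
    have hnoM : ∀ k, d + k ≥ (col c).card → ¬ HasM (AdjRel J col c) k (col c) := by
      intro k hk hM
      obtain ⟨S, h1, h2, h3⟩ := cover J col c k _ hM (hiso c hc)
      exact hdis c S h1 (by omega) h3
    have hlt : d < (col c).card := by
      by_contra h
      exact hnoM 0 (by omega) trivial
    obtain ⟨s, hs⟩ : ∃ s, (col c).card = d + (s + 1) := ⟨(col c).card - d - 1, by omega⟩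
    have hwc := hw c
    have := erdos_gallai_s12 (r := AdjRel J col c)
      (fun a b ⟨j, h1, h2, h3, h4⟩ => ⟨j, h1, h2, h4, h3⟩) s (hnoM (s + 1) (by omega))
      (by omega)
    rwa [show (col c).card - s = d + 1 by omega, Nat.add_sub_cancel] at this
  have hdj : (J : Set ι).PairwiseDisjoint (fun c => nonadj (AdjRel J col c) (col c)) := by
    intro c hc c' hc' hcc
    refine Finset.disjoint_left.2 ?_
    intro p hp hp'
    have h1 := mem_nonadj.1 hp
    have h2 := mem_nonadj.1 hp'
    exact h1.2.2.2 ⟨c', hc', hcc.symm, h2.1, h2.2.1⟩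
  have hU : J.biUnion (fun c => nonadj (AdjRel J col c) (col c)) ⊆ R.offDiag := by
    intro p hp
    obtain ⟨c, hc, hp⟩ := Finset.mem_biUnion.1 hp
    have h1 := mem_nonadj.1 hp
    exact Finset.mem_offDiag.2 ⟨hsub c hc h1.1, hsub c hc h1.2.1, h1.2.2.1⟩
  have h1 := Finset.card_le_card hU
  rw [Finset.card_biUnion hdj, Finset.offDiag_card] at h1
  have h2 := Finset.card_nsmul_le_sum J _ _ hcol
  rw [smul_eq_mul] at h2
  have h3 := Nat.mul_le_mul_right ((d + 1) * d) (show R.card + 1 ≤ J.card from hJR)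
  have h4 := h3.trans (h2.trans h1)
  by_contra hcon
  rcases Nat.eq_zero_or_pos R.card with h0 | h0
  · rw [h0] at h4
    simp at h4
    omega
  · obtain ⟨t, ht⟩ : ∃ t, R.card = t + 1 := ⟨R.card - 1, by omega⟩
    rw [ht] at h4 hcon
    have e2 : (t + 1) * (t + 1) - (t + 1) = (t + 1) * t := by
      rw [Nat.mul_succ, Nat.add_sub_cancel]
    rw [e2] at h4
    have h5 : t ≤ (d + 1) * d := by nlinarith
    nlinarith [Nat.mul_le_mul_left (t + 1) h5]

lemma reduce (d : ℕ) (hd : 1 ≤ d) (col : ι → Finset ρ) (hdis : Disjunct d col)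
    (hw : ∀ j, (col j).card ≤ 5 * d / 3) (m : ℕ) : ∀ (J : Finset ι) (R : Finset ρ),
    R.card = m → R.card < J.card → (∀ j ∈ J, col j ⊆ R) → R.card > d ^ 2 + d + 1 := by
  induction m with
  | zero =>
    intro J R h0 hJ hsub
    obtain ⟨j, hj⟩ : J.Nonempty := Finset.card_pos.1 (by omega)
    rw [Finset.card_eq_zero] at h0
    exact absurd ((hsub j hj).trans (by simp [h0])) (hdis j ∅ (by simp) (by simp))
  | succ m ih =>
    intro J R hm hJ hsub
    by_cases hiso : ∀ c ∈ J, ∀ i ∈ col c, ∃ j ∈ J, j ≠ c ∧ i ∈ col j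
    · exact main_count d hd col hdis hw J R hJ hsub hiso
    push Not at hiso
    obtain ⟨c, hc, i, hi, hno⟩ := hiso
    have hiR := hsub c hc hi
    have e1 := Finset.card_erase_of_mem hiR
    have e2 := Finset.card_erase_of_mem hc
    have := ih (J.erase c) (R.erase i) (by omega) (by omega) (by
      intro j hj z hz
      rw [Finset.mem_erase] at hj ⊢
      exact ⟨fun h => hno j hj.2 hj.1 (h ▸ hz), hsub j hj.2 hz⟩)
    omega

end

/-- A `t × n` `d`-disjunct matrix with `n > t` in which every column has weight
at most `⌊5d/3⌋` satisfies `t > d² + d + 1`. -/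
theorem disjunct_small_weight_bound
    (d t n : ℕ) (hd : 1 ≤ d) (hn : n > t)
    (col : Fin n → Finset (Fin t))
    (hdis : Disjunct d col)
    (hw : ∀ j, (col j).card ≤ 5 * d / 3) :
    t > d ^ 2 + d + 1 := by
  have := reduce d hd col hdis hw t Finset.univ Finset.univ (by simp) (by simpa using hn)
    (fun j _ => Finset.subset_univ _)
  simpa using this
end
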